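/- arXiv:2604.18410 — 3 statements merged into one kernel-verified Lean document; each statement's English description precedes it below -/
import Mathlib

section
/- Let G be a countably infinite discrete group with a Denjoy action on 𝕋, with unique minimal set Y. Define x ∼ y iff x = y or x and y lie in the closure of the same connected component of 𝕋 \ Y. Then ∼ is an equivalence relation, the quotient space 𝕋/∼ is homeomorphic to 𝕋, the quotient map φ : 𝕋 → 𝕋/∼ is a monotone degree-one map, the action descends to a well-defined action of G on 𝕋/∼ intertwining φ, and this induced action is minimal. -/
open MeasureTheory Topology Filter Set Function

noncomputable section

/-- The circle `ℝ/ℤ`. -/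
abbrev T1 := UnitAddCircle

/-- `F : ℝ → ℝ` is an (increasing, continuous) lift of the circle map `f`. -/
def IsLiftOf (F : ℝ → ℝ) (f : T1 → T1) : Prop :=
  Continuous F ∧ StrictMono F ∧ (∀ x : ℝ, F (x + 1) = F x + 1) ∧
    ∀ x : ℝ, ((F x : T1)) = f ((x : T1))

/-- A circle map is orientation preserving if it admits an increasing lift. -/
def OrientationPreservingMap (f : T1 → T1) : Prop := ∃ F : ℝ → ℝ, IsLiftOf F f

/-- `ρ` is the rotation number of `f`:  `Fⁿ(x)/n → ρ  (mod ℤ)` for a lift `F`. -/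
def HasRotationNumber (f : T1 → T1) (ρ : T1) : Prop :=
  ∃ F : ℝ → ℝ, IsLiftOf F f ∧
    ∀ x : ℝ, Tendsto (fun n : ℕ => ((F^[n] x / (n : ℝ) : ℝ) : T1)) atTop (nhds ρ)

variable (G : Type*) [Group G] [MulAction G T1]

/-- A set is invariant under the action. -/
def InvariantSet (S : Set T1) : Prop := ∀ g : G, ∀ x ∈ S, g • x ∈ S

/-- A minimal set: nonempty, closed, invariant, with no proper nonempty closed
invariant subset. -/
def IsMinimalSet (S : Set T1) : Prop :=
  S.Nonempty ∧ IsClosed S ∧ InvariantSet G S ∧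
    ∀ Z : Set T1, Z.Nonempty → IsClosed Z → InvariantSet G Z → Z ⊆ S → Z = S

/-- The action (by homeomorphisms) is orientation preserving. -/
def OrientationPreservingAction : Prop :=
  (∀ g : G, Continuous fun x : T1 => g • x) ∧
    ∀ g : G, OrientationPreservingMap fun x : T1 => g • x

/-- The action is free. -/
def FreeAction : Prop := ∀ (g : G) (x : T1), g • x = x → g = 1

/-- A Denjoy action: orientation preserving, non-minimal, all orbits infinite. -/
def IsDenjoy : Prop :=
  OrientationPreservingAction G ∧ ¬ IsMinimalSet G (Set.univ : Set T1) ∧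
    ∀ x : T1, (MulAction.orbit G x).Infinite

/-- A monotone degree-one map of the circle: a continuous surjection admitting a
non-decreasing lift `F` with `F(x+1) = F(x)+1`. -/
def MonotoneDegreeOne (φ : T1 → T1) : Prop :=
  Continuous φ ∧ Function.Surjective φ ∧
    ∃ F : ℝ → ℝ, Monotone F ∧ (∀ x : ℝ, F (x + 1) = F x + 1) ∧
      ∀ x : ℝ, ((F x : T1)) = φ ((x : T1))

/-! A nonempty perfect set `Y ⊆ ℝ/ℤ` carries an atomless probability measure `μ` with support
exactly `Y`. Integrating over `μ` the signed number of lifts to `(0, x]` gives a continuous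
degree-one lift that is constant on an interval precisely when the interior of that interval misses
`Y`, so the circle map it induces collapses each closed gap of `Y` and identifies nothing else.

An infinite minimal set is perfect because its derived set is closed, invariant and nonempty.
Homeomorphisms preserving `Y` permute its gaps, so the action descends to the quotient, and the
induced action is minimal because already `Y` surjects onto the quotient. -/

section AtomlessMeasures

variable {X Z : Type*} [MeasurableSpace X]

lemma nullSingletonClass_of_absolutelyContinuous {μ ν : Measure X} [NullSingletonClass ν]
    (h : μ ≪ ν) : NullSingletonClass μ :=
  ⟨fun x => h (measure_singleton x)⟩

lemma nullSingletonClass_map [MeasurableSpace Z] [MeasurableSingletonClass Z] (μ : Measure X)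
    [NullSingletonClass μ] {f : X → Z} (hf : Measurable f) (hinj : Injective f) :
    NullSingletonClass (μ.map f) where
  measure_singleton z := by
    rw [Measure.map_apply hf (measurableSet_singleton z)]
    exact (subsingleton_singleton.preimage hinj).measure_zero μ

lemma nullSingletonClass_sum [MeasurableSingletonClass X] {ι : Type*} (μ : ι → Measure X)
    [∀ i, NullSingletonClass (μ i)] : NullSingletonClass (Measure.sum μ) where
  measure_singleton x := by
    simp only [Measure.sum_apply _ (measurableSet_singleton x), measure_singleton, tsum_zero]

lemma exists_nullSingletonClass_of_not_countable [StandardBorelSpace X] {S : Set X}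
    (hS : MeasurableSet S) (hunc : ¬ S.Countable) :
    ∃ μ : Measure X, IsProbabilityMeasure μ ∧ NullSingletonClass μ ∧ μ Sᶜ = 0 := by
  have : StandardBorelSpace S := hS.standardBorel
  let e : ℝ ≃ᵐ S := PolishSpace.measurableEquivOfNotCountable not_countable hunc
  have hmeas : Measurable fun r => (e r : X) := measurable_subtype_coe.comp e.measurable
  have hinj : Injective fun r => (e r : X) := Subtype.val_injective.comp e.injective
  have hatom := ProbabilityTheory.nullSingletonClass_gaussianReal (μ := 0) one_ne_zero
  refine ⟨(ProbabilityTheory.gaussianReal 0 1).map fun r => (e r : X),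
    Measure.isProbabilityMeasure_map hmeas.aemeasurable, nullSingletonClass_map _ hmeas hinj, ?_⟩
  rw [Measure.map_apply hmeas hS.compl,
    show (fun r => (e r : X)) ⁻¹' Sᶜ = ∅ from eq_empty_of_forall_notMem fun r hr => hr (e r).2,
    measure_empty]

lemma measure_eq_zero_iff_disjoint_support [TopologicalSpace X] [HereditarilyLindelofSpace X]
    {μ : Measure X} {U : Set X} (hU : IsOpen U) : μ U = 0 ↔ Disjoint U μ.support :=
  ⟨fun h => subset_compl_iff_disjoint_right.1 (Measure.subset_compl_support_of_isOpen hU h),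
    fun h => measure_mono_null h.subset_compl_right Measure.measure_compl_support⟩

end AtomlessMeasures

section PerfectSets

variable {X : Type*} [TopologicalSpace X] [PolishSpace X] {C : Set X}

lemma not_countable_of_perfect (hC : Perfect C) (hne : C.Nonempty) : ¬ C.Countable := by
  let := TopologicalSpace.upgradeIsCompletelyMetrizable X
  obtain ⟨f, hfC, -, hf⟩ := hC.exists_nat_bool_injection hne
  intro hcount
  have hlt : Cardinal.aleph0 < Cardinal.mk (ℕ → Bool) := by
    simpa using Cardinal.cantor Cardinal.aleph0
  have : Countable (ℕ → Bool) :=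
    countable_univ_iff.1 (preimage_eq_univ_iff.2 hfC ▸ hcount.preimage hf)
  exact Cardinal.mk_le_aleph0.not_gt hlt

lemma exists_nullSingletonClass_support_eq [MeasurableSpace X] [BorelSpace X] (hC : Perfect C)
    (hne : C.Nonempty) :
    ∃ μ : Measure X, IsProbabilityMeasure μ ∧ NullSingletonClass μ ∧ μ.support = C := by
  let B := {U : Set X // U ∈ TopologicalSpace.countableBasis X ∧ (U ∩ C).Nonempty}
  have : Countable B :=
    ((TopologicalSpace.countable_countableBasis X).mono fun U hU => hU.1).to_subtype
  have hlocal : ∀ U : B, ∃ p : Measure X,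
      IsProbabilityMeasure p ∧ NullSingletonClass p ∧ p (closure (U ∩ C))ᶜ = 0 := by
    rintro ⟨U, hU, x, hxU, hxC⟩
    obtain ⟨hperf, hne⟩ := hC.closure_nhds_inter x hxC hxU
      (TopologicalSpace.isOpen_of_mem_countableBasis hU)
    exact exists_nullSingletonClass_of_not_countable hperf.closed.measurableSet
      (not_countable_of_perfect hperf hne)
  choose p hprob hatom hnull using hlocal
  have hatomSum := nullSingletonClass_sum p
  have hpos : ∀ x ∈ C, ∀ W ∈ 𝓝 x, 0 < Measure.sum p W := by
    intro x hx W hW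
    obtain ⟨U, hU, hxU, hUW⟩ :=
      (TopologicalSpace.isBasis_countableBasis X).exists_closure_subset hW
    let i : B := ⟨U, hU, x, hxU, hx⟩
    calc 0 < p i (closure (U ∩ C)) := by
          rw [(prob_compl_eq_zero_iff isClosed_closure.measurableSet).1 (hnull i)]
          exact one_pos
      _ ≤ p i W := measure_mono ((closure_mono inter_subset_left).trans hUW)
      _ ≤ Measure.sum p W := Measure.le_sum p i W
  have hsupp : (Measure.sum p).support = C := by
    refine Subset.antisymm (Measure.support_subset_of_isClosed hC.closed ?_)
      fun x hx => (Measure.mem_support_iff_forall x).2 (hpos x hx)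
    rw [mem_ae_iff, Measure.sum_apply_eq_zero]
    exact fun i => measure_mono_null
      (compl_subset_compl.2 (closure_minimal inter_subset_right hC.closed)) (hnull i)
  have : NeZero (Measure.sum p) :=
    ⟨Measure.nonempty_support_iff.1 (hsupp.symm ▸ hne)⟩
  refine ⟨(Measure.sum p).toFinite, inferInstance,
    nullSingletonClass_of_absolutelyContinuous (toFinite_absolutelyContinuous _), ?_⟩
  rw [← hsupp]
  exact Subset.antisymm (toFinite_absolutelyContinuous _).support_mono
    (absolutelyContinuous_toFinite _).support_mono

end PerfectSets

section CollapseRel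

variable {X Z : Type*} [TopologicalSpace X] [TopologicalSpace Z] {Y : Set X} {x y : X}

/-- The relation collapsing the gaps of `Y`, that is, the connected components of `Yᶜ`: two points
are related if they are equal or lie in the closure of a common gap. -/
def CollapseRel (Y : Set X) (x y : X) : Prop :=
  x = y ∨ ∃ z ∈ Yᶜ, x ∈ closure (connectedComponentIn Yᶜ z) ∧
    y ∈ closure (connectedComponentIn Yᶜ z)

namespace CollapseRel

lemma symm (h : CollapseRel Y x y) : CollapseRel Y y x :=
  h.imp Eq.symm fun ⟨z, hz, hx, hy⟩ => ⟨z, hz, hy, hx⟩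

lemma of_isPreconnected {S : Set X} (hS : IsPreconnected S) (hSY : S ⊆ Yᶜ)
    (hx : x ∈ closure S) (hy : y ∈ closure S) : CollapseRel Y x y := by
  obtain ⟨z, hz⟩ := closure_nonempty_iff.1 ⟨x, hx⟩
  have hsub := closure_mono (hS.subset_connectedComponentIn hz hSY)
  exact Or.inr ⟨z, hSY hz, hsub hx, hsub hy⟩

lemma map {Y' : Set Z} {f : X → Z} (hf : Continuous f) (hYY' : MapsTo f Yᶜ Y'ᶜ)
    (h : CollapseRel Y x y) : CollapseRel Y' (f x) (f y) := by
  obtain rfl | ⟨z, -, hx, hy⟩ := h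
  · exact Or.inl rfl
  · exact of_isPreconnected (isPreconnected_connectedComponentIn.image f hf.continuousOn)
      (hYY'.mono_left (connectedComponentIn_subset _ z)).image_subset
      (image_closure_subset_closure_image hf (mem_image_of_mem f hx))
      (image_closure_subset_closure_image hf (mem_image_of_mem f hy))

lemma apply_eq [T2Space Z] {f : X → Z} (hf : Continuous f)
    (hloc : ∀ x ∉ Y, ∀ᶠ y in 𝓝 x, f y = f x) (h : CollapseRel Y x y) : f x = f y := by
  obtain rfl | ⟨z, hz, hx, hy⟩ := h
  · rfl
  have : PreconnectedSpace (connectedComponentIn Yᶜ z) :=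
    isPreconnected_iff_preconnectedSpace.1 isPreconnected_connectedComponentIn
  have hconst : IsLocallyConstant ((connectedComponentIn Yᶜ z).domRestrict f) :=
    (IsLocallyConstant.iff_eventually_eq _).2 fun w =>
      continuous_subtype_val.continuousAt.eventually
        (hloc w (connectedComponentIn_subset _ _ w.2))
  have heq : EqOn f (fun _ => f z) (connectedComponentIn Yᶜ z) := fun w hw =>
    hconst.apply_eq_of_preconnectedSpace ⟨w, hw⟩ ⟨z, mem_connectedComponentIn hz⟩
  have heq' := heq.closure hf continuous_const
  exact (heq' hx).trans (heq' hy).symm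

lemma exists_mem [PreconnectedSpace X] [LocallyConnectedSpace X] (hY : IsClosed Y)
    (hne : Y.Nonempty) (x : X) : ∃ y ∈ Y, CollapseRel Y x y := by
  by_cases hx : x ∈ Y
  · exact ⟨x, hx, Or.inl rfl⟩
  suffices hmeet : (closure (connectedComponentIn Yᶜ x) ∩ Y).Nonempty by
    obtain ⟨y, hy, hyY⟩ := hmeet
    exact ⟨y, hyY, Or.inr ⟨x, hx, subset_closure (mem_connectedComponentIn hx), hy⟩⟩
  by_contra hmiss
  have hsub : closure (connectedComponentIn Yᶜ x) ⊆ connectedComponentIn Yᶜ x :=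
    isPreconnected_connectedComponentIn.closure.subset_connectedComponentIn
      (subset_closure (mem_connectedComponentIn hx))
      (subset_compl_iff_disjoint_right.2 (disjoint_iff_inter_eq_empty.2
        (not_nonempty_iff_eq_empty.1 hmiss)))
  have huniv : connectedComponentIn Yᶜ x = univ :=
    IsClopen.eq_univ ⟨isClosed_of_closure_subset hsub, hY.isOpen_compl.connectedComponentIn⟩
      ⟨x, mem_connectedComponentIn hx⟩
  obtain ⟨y, hy⟩ := hne
  exact connectedComponentIn_subset Yᶜ x (huniv ▸ mem_univ y) hy

end CollapseRel

end CollapseRel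

section CircleMaps

lemma coe_eq_coe_iff_exists_int {a b : ℝ} : (a : T1) = b ↔ ∃ n : ℤ, b = a + n := by
  rw [QuotientAddGroup.eq, AddSubgroup.mem_zmultiples_iff]
  simp only [zsmul_eq_mul, mul_one, eq_neg_add_iff_add_eq, eq_comm]

lemma isOpenMap_coe_circle : IsOpenMap ((↑) : ℝ → T1) := QuotientAddGroup.isOpenMap_coe

lemma continuous_coe_circle : Continuous ((↑) : ℝ → T1) := AddCircle.continuous_mk' 1

instance : LocallyConnectedSpace T1 :=
  have : LocallyPathConnectedSpace T1 :=
    (QuotientAddGroup.isQuotientMap_mk _).locallyPathConnectedSpace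
  inferInstance

/-- The circle map induced by a degree-one lift. -/
def inducedCircleMap (F : CircleDeg1Lift) : T1 → T1 :=
  Periodic.lift (f := fun x : ℝ => (F x : T1)) (c := 1) fun x => by
    simp only [F.map_add_one, AddCircle.coe_add_period]

variable {F : CircleDeg1Lift}

lemma inducedCircleMap_coe (F : CircleDeg1Lift) (x : ℝ) :
    inducedCircleMap F (x : T1) = (F x : T1) := rfl

lemma monotoneDegreeOne_inducedCircleMap (hF : Continuous F) :
    MonotoneDegreeOne (inducedCircleMap F) := by
  refine ⟨?_, fun t => ?_, F, F.monotone, F.map_add_one, fun x => (inducedCircleMap_coe F x).symm⟩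
  · exact (QuotientAddGroup.isQuotientMap_mk _).continuous_iff.2 (continuous_coe_circle.comp hF)
  · obtain ⟨r, rfl⟩ := QuotientAddGroup.mk_surjective t
    obtain ⟨x, rfl⟩ := F.continuous_iff_surjective.1 hF r
    exact ⟨x, rfl⟩

variable {Y : Set T1}

lemma eventually_inducedCircleMap_eq (hY : IsClosed Y)
    (hF : ∀ a b : ℝ, a ≤ b → Disjoint ((↑) '' Ioo a b) Y → F a = F b) {x : T1} (hx : x ∉ Y) :
    ∀ᶠ y in 𝓝 x, inducedCircleMap F y = inducedCircleMap F x := by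
  obtain ⟨a, rfl⟩ := QuotientAddGroup.mk_surjective x
  obtain ⟨l, u, ha, hlu⟩ := mem_nhds_iff_exists_Ioo_subset.1
    ((hY.isOpen_compl.preimage continuous_coe_circle).mem_nhds hx)
  have hends : F l = F u := hF l u (ha.1.trans ha.2).le
    (subset_compl_iff_disjoint_right.1 (image_subset_iff.2 hlu))
  have hconst : ∀ r ∈ Ioo l u, F r = F l := fun r hr =>
    le_antisymm ((F.mono hr.2.le).trans_eq hends.symm) (F.mono hr.1.le)
  filter_upwards [isOpenMap_coe_circle.image_mem_nhds (isOpen_Ioo.mem_nhds ha)]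
  rintro _ ⟨r, hr, rfl⟩
  exact congrArg (fun s : ℝ => (s : T1)) ((hconst r hr).trans (hconst a ha).symm)

lemma collapseRel_of_disjoint_image_Ioo {a b : ℝ} (hab : a ≤ b)
    (h : Disjoint ((↑) '' Ioo a b) Y) : CollapseRel Y (a : T1) b := by
  obtain rfl | hlt := hab.eq_or_lt
  · exact Or.inl rfl
  have hsub : (↑) '' Icc a b ⊆ closure (((↑) : ℝ → T1) '' Ioo a b) := by
    rw [← closure_Ioo hlt.ne]
    exact image_closure_subset_closure_image continuous_coe_circle
  exact .of_isPreconnected (isPreconnected_Ioo.image _ continuous_coe_circle.continuousOn)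
    h.subset_compl_right (hsub (mem_image_of_mem _ (left_mem_Icc.2 hab)))
    (hsub (mem_image_of_mem _ (right_mem_Icc.2 hab)))

theorem collapseRel_iff_inducedCircleMap_eq (hY : IsClosed Y) (hcont : Continuous F)
    (hF : ∀ a b : ℝ, a ≤ b → (F a = F b ↔ Disjoint ((↑) '' Ioo a b) Y)) (x y : T1) :
    CollapseRel Y x y ↔ inducedCircleMap F x = inducedCircleMap F y := by
  refine ⟨CollapseRel.apply_eq (monotoneDegreeOne_inducedCircleMap hcont).1 fun x =>
    eventually_inducedCircleMap_eq hY fun a b hab => (hF a b hab).2, fun h => ?_⟩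
  obtain ⟨a, rfl⟩ := QuotientAddGroup.mk_surjective x
  obtain ⟨b, rfl⟩ := QuotientAddGroup.mk_surjective y
  obtain ⟨n, hn⟩ := coe_eq_coe_iff_exists_int.1 h
  rw [← F.map_add_int] at hn
  have ha : ((a + n : ℝ) : T1) = a := (coe_eq_coe_iff_exists_int.2 ⟨n, rfl⟩).symm
  rw [← ha]
  obtain hle | hle := le_total (a + n) b
  · exact collapseRel_of_disjoint_image_Ioo hle ((hF _ _ hle).1 hn.symm)
  · exact (collapseRel_of_disjoint_image_Ioo hle ((hF _ _ hle).1 hn)).symm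

end CircleMaps

section CumulativeLift

/-- The representative in `(0, 1]` of a point of the circle. -/
def circleRep (t : T1) : ℝ := AddCircle.measurableEquivIoc 1 0 t

lemma measurable_circleRep : Measurable circleRep :=
  measurable_subtype_coe.comp (AddCircle.measurableEquivIoc 1 0).measurable

lemma circleRep_mem_Ioc (t : T1) : circleRep t ∈ Ioc 0 1 := by
  simpa only [circleRep, zero_add] using (AddCircle.measurableEquivIoc 1 0 t).2

lemma coe_circleRep (t : T1) : (circleRep t : T1) = t :=
  (AddCircle.measurableEquivIoc 1 0).symm_apply_apply t

lemma coe_eq_iff_exists_circleRep_add_int {x : ℝ} {t : T1} :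
    (x : T1) = t ↔ ∃ n : ℤ, x = circleRep t + n := by
  rw [eq_comm, ← coe_eq_coe_iff_exists_int, coe_circleRep]

lemma floor_sub_circleRep_lt_iff {a b : ℝ} {t : T1} :
    ⌊a - circleRep t⌋ < ⌊b - circleRep t⌋ ↔ t ∈ ((↑) : ℝ → T1) '' Ioc a b := by
  constructor
  · intro h
    refine ⟨circleRep t + ⌊b - circleRep t⌋, ⟨?_, ?_⟩,
      coe_eq_iff_exists_circleRep_add_int.2 ⟨_, rfl⟩⟩
    · linarith [Int.floor_lt.1 h]
    · linarith [Int.floor_le (b - circleRep t)]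
  · rintro ⟨x, hx, hxt⟩
    obtain ⟨n, rfl⟩ := coe_eq_iff_exists_circleRep_add_int.1 hxt
    exact (Int.floor_lt.2 (by linarith [hx.1])).trans_le (Int.le_floor.2 (by linarith [hx.2]))

lemma measurable_floor_sub_circleRep (x : ℝ) :
    Measurable fun t : T1 => (⌊x - circleRep t⌋ : ℝ) :=
  measurable_from_top.comp (measurable_circleRep.const_sub x).floor

lemma norm_floor_sub_circleRep_le (x : ℝ) (t : T1) : ‖(⌊x - circleRep t⌋ : ℝ)‖ ≤ |x| + 2 := by
  obtain ⟨hpos, hle⟩ := circleRep_mem_Ioc t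
  rw [Real.norm_eq_abs, abs_le]
  constructor <;> linarith [Int.floor_le (x - circleRep t), Int.lt_floor_add_one (x - circleRep t),
    neg_abs_le x, le_abs_self x]

lemma continuousAt_floor_sub_circleRep {x : ℝ} {t : T1} (ht : t ≠ x) :
    ContinuousAt (fun y : ℝ => (⌊y - circleRep t⌋ : ℝ)) x := by
  have hlt : (⌊x - circleRep t⌋ : ℝ) < x - circleRep t :=
    (Int.floor_le _).lt_of_ne fun h =>
      ht (coe_eq_iff_exists_circleRep_add_int.2 ⟨_, by rw [h]; ring⟩).symm
  exact ((continuousOn_floor _).continuousAt (Ico_mem_nhds hlt (Int.lt_floor_add_one _))).comp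
    (f := fun y => y - circleRep t) (by fun_prop)

variable (μ : Measure T1)

lemma integrable_floor_sub_circleRep [IsFiniteMeasure μ] (x : ℝ) :
    Integrable (fun t : T1 => (⌊x - circleRep t⌋ : ℝ)) μ :=
  .of_bound (measurable_floor_sub_circleRep x).aestronglyMeasurable (|x| + 2)
    (Eventually.of_forall (norm_floor_sub_circleRep_le x))

variable [IsProbabilityMeasure μ]

/-- The cumulative distribution function on `ℝ` of the `1`-periodic extension of `μ`, vanishing
at `0`. The integrand is the signed number of lifts of `t` in `(0, x]`. -/
def cumulativeLift : CircleDeg1Lift where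
  toFun x := ∫ t, (⌊x - circleRep t⌋ : ℝ) ∂μ
  monotone' a b hab := integral_mono (integrable_floor_sub_circleRep μ a)
    (integrable_floor_sub_circleRep μ b) fun t => Int.cast_le.2 (by gcongr)
  map_add_one' x := by
    have hshift : ∀ t, (⌊x + 1 - circleRep t⌋ : ℝ) = ⌊x - circleRep t⌋ + 1 := fun t => by
      rw [add_sub_right_comm, Int.floor_add_one, Int.cast_add, Int.cast_one]
    simp only [hshift]
    rw [integral_add (integrable_floor_sub_circleRep μ x) (integrable_const _), integral_const,
      probReal_univ, one_smul]

lemma continuous_cumulativeLift [NullSingletonClass μ] : Continuous (cumulativeLift μ) := by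
  refine continuous_iff_continuousAt.2 fun x =>
    continuousAt_of_dominated (bound := fun _ => |x| + 3)
      (Eventually.of_forall fun y => (measurable_floor_sub_circleRep y).aestronglyMeasurable) ?_
      (integrable_const _) ?_
  · filter_upwards [(continuous_abs.tendsto x).eventually_lt_const (lt_add_one |x|)] with y hy
    exact Eventually.of_forall fun t => (norm_floor_sub_circleRep_le y t).trans (by linarith)
  · filter_upwards [Measure.ae_ne μ (x : T1)] with t ht
    exact continuousAt_floor_sub_circleRep ht

lemma cumulativeLift_eq_iff_measure_image_Ioc {a b : ℝ} (hab : a ≤ b) :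
    cumulativeLift μ a = cumulativeLift μ b ↔ μ ((↑) '' Ioc a b) = 0 := by
  have hle : ∀ t : T1, ⌊a - circleRep t⌋ ≤ ⌊b - circleRep t⌋ := fun t => by gcongr
  have hae := integral_eq_iff_of_ae_le (integrable_floor_sub_circleRep μ a)
    (integrable_floor_sub_circleRep μ b) (Eventually.of_forall fun t => Int.cast_le.2 (hle t))
  have hset : {t : T1 | ¬ (⌊a - circleRep t⌋ : ℝ) = ⌊b - circleRep t⌋} = (↑) '' Ioc a b := by
    ext t
    rw [← floor_sub_circleRep_lt_iff, mem_ofPred_eq, Int.cast_inj, (hle t).lt_iff_ne]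
  rw [← hset]
  exact hae.trans ae_iff

lemma cumulativeLift_eq_iff_disjoint_support [NullSingletonClass μ] {a b : ℝ} (hab : a ≤ b) :
    cumulativeLift μ a = cumulativeLift μ b ↔ Disjoint ((↑) '' Ioo a b) μ.support := by
  rw [cumulativeLift_eq_iff_measure_image_Ioc μ hab,
    ← measure_eq_zero_iff_disjoint_support (isOpenMap_coe_circle _ isOpen_Ioo)]
  refine ⟨measure_mono_null (image_mono Ioo_subset_Ioc_self), fun h => ?_⟩
  refine measure_mono_null ?_ (measure_union_null h (measure_singleton (b : T1)))
  rw [← image_singleton, ← image_union]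
  exact image_mono fun x hx => hx.2.lt_or_eq.imp (fun hlt => ⟨hx.1, hlt⟩) id

end CumulativeLift

theorem exists_monotoneDegreeOne_collapse {Y : Set T1} (hY : Perfect Y) (hne : Y.Nonempty) :
    ∃ φ : T1 → T1, MonotoneDegreeOne φ ∧ ∀ x y, CollapseRel Y x y ↔ φ x = φ y := by
  obtain ⟨μ, _, _, rfl⟩ := exists_nullSingletonClass_support_eq hY hne
  have hcont := continuous_cumulativeLift μ
  exact ⟨inducedCircleMap (cumulativeLift μ), monotoneDegreeOne_inducedCircleMap hcont,
    collapseRel_iff_inducedCircleMap_eq hY.closed hcont fun _ _ =>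
      cumulativeLift_eq_iff_disjoint_support μ⟩

section DescendedActions

lemma exists_descended_action {M X Z : Type*} [Monoid M] [TopologicalSpace X] [TopologicalSpace Z]
    [MulAction M X] [ContinuousConstSMul M X] {φ : X → Z} (hφ : IsQuotientMap φ)
    (hdesc : ∀ (g : M) (x y : X), φ x = φ y → φ (g • x) = φ (g • y)) :
    ∃ β : M → Z → Z, (∀ z, β 1 z = z) ∧ (∀ g h z, β (g * h) z = β g (β h z)) ∧
      (∀ g, Continuous (β g)) ∧ ∀ g x, φ (g • x) = β g (φ x) := by
  let β : M → Z → Z := fun g z => φ (g • surjInv hφ.surjective z)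
  have hβ : ∀ g x, φ (g • x) = β g (φ x) := fun g x =>
    hdesc g x _ (surjInv_eq hφ.surjective (φ x)).symm
  refine ⟨β, fun z => ?_, fun g h z => ?_, fun g => hφ.continuous_iff.2 ?_, hβ⟩
  · obtain ⟨x, rfl⟩ := hφ.surjective z
    rw [← hβ, one_smul]
  · obtain ⟨x, rfl⟩ := hφ.surjective z
    rw [← hβ h x, ← hβ g (h • x), ← hβ (g * h) x, mul_smul]
  · have hcomp : β g ∘ φ = fun x => φ (g • x) := funext fun x => (hβ g x).symm
    rw [hcomp]
    exact hφ.continuous.comp (continuous_const_smul g)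

namespace IsMinimalSet

variable {G} {Y : Set T1}

lemma perfect [ContinuousConstSMul G T1] (hY : IsMinimalSet G Y) (hinf : Y.Infinite) :
    Perfect Y := by
  obtain ⟨-, hcl, hinv, hmin⟩ := hY
  suffices hderived : derivedSet Y = Y from ⟨hcl, fun x hx => hderived.ge hx⟩
  refine hmin _ ?_ (isClosed_derivedSet Y) (fun g x hx => ?_)
    ((isClosed_iff_derivedSet_subset Y).1 hcl)
  · obtain ⟨x, -, hx⟩ := hinf.exists_accPt_of_subset_isCompact hcl.isCompact Subset.rfl
    exact ⟨x, hx⟩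
  · have hgx : AccPt (g • x) (map (g • ·) (𝓟 Y)) :=
      AccPt.map hx (continuous_const_smul g).continuousAt (MulAction.injective g)
    exact hgx.mono (map_principal.trans_le (principal_mono.2 (image_subset_iff.2 (hinv g))))

lemma mapsTo_smul_compl (hY : IsMinimalSet G Y) (g : G) : MapsTo (g • ·) Yᶜ Yᶜ :=
  fun x hx hgx => hx (by simpa only [inv_smul_smul] using hY.2.2.1 g⁻¹ _ hgx)

lemma eq_univ_of_semiconj {Z : Type*} [TopologicalSpace Z] (hY : IsMinimalSet G Y) {φ : T1 → Z}
    (hφ : Continuous φ) (hsurj : SurjOn φ Y univ) {β : G → Z → Z}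
    (hβ : ∀ g x, φ (g • x) = β g (φ x)) {W : Set Z} (hne : W.Nonempty) (hcl : IsClosed W)
    (hinv : ∀ g, ∀ z ∈ W, β g z ∈ W) : W = univ := by
  have hsub : Y ∩ φ ⁻¹' W = Y := by
    refine hY.2.2.2 _ ?_ (hY.2.1.inter (hcl.preimage hφ)) (fun g x hx => ?_) inter_subset_left
    · obtain ⟨z, hz⟩ := hne
      obtain ⟨y, hy, rfl⟩ := hsurj (mem_univ z)
      exact ⟨y, hy, hz⟩
    · exact ⟨hY.2.2.1 g x hx.1, by simpa only [mem_preimage, hβ] using hinv g _ hx.2⟩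
  refine eq_univ_of_forall fun z => ?_
  obtain ⟨y, hy, rfl⟩ := hsurj (mem_univ z)
  exact (hsub.ge hy).2

end IsMinimalSet

end DescendedActions

theorem statement5_general {G : Type*} [Group G] [MulAction G T1] [ContinuousConstSMul G T1]
    {Y : Set T1} (hY : IsMinimalSet G Y) (hinf : Y.Infinite) :
    Equivalence (CollapseRel Y) ∧
    ∃ (φ : T1 → T1) (β : G → T1 → T1),
      IsQuotientMap φ ∧
      MonotoneDegreeOne φ ∧
      (∀ x y : T1, CollapseRel Y x y ↔ φ x = φ y) ∧
      (∀ x : T1, β 1 x = x) ∧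
      (∀ (g h : G) (x : T1), β (g * h) x = β g (β h x)) ∧
      (∀ g : G, Continuous (β g)) ∧
      (∀ (g : G) (x : T1), φ (g • x) = β g (φ x)) ∧
      (∀ Z : Set T1, Z.Nonempty → IsClosed Z →
        (∀ g : G, ∀ x ∈ Z, β g x ∈ Z) → Z = Set.univ) := by
  obtain ⟨φ, hφ, hfib⟩ := exists_monotoneDegreeOne_collapse (hY.perfect hinf) hY.1
  have hquot : IsQuotientMap φ := .of_surjective_continuous hφ.2.1 hφ.1
  have hdesc (g : G) (x y : T1) (h : φ x = φ y) : φ (g • x) = φ (g • y) :=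
    (hfib _ _).1 (((hfib x y).2 h).map (continuous_const_smul g) (hY.mapsTo_smul_compl g))
  obtain ⟨β, hone, hmul, hcont, hβ⟩ := exists_descended_action hquot hdesc
  have hsurj : SurjOn φ Y univ := by
    intro t _
    obtain ⟨x, rfl⟩ := hφ.2.1 t
    obtain ⟨y, hy, hxy⟩ := CollapseRel.exists_mem hY.2.1 hY.1 x
    exact ⟨y, hy, ((hfib x y).1 hxy).symm⟩
  have hequiv : Equivalence (CollapseRel Y) := by
    rw [show CollapseRel Y = fun x y => φ x = φ y from funext₂ fun x y => propext (hfib x y)]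
    exact eq_equivalence.comap φ
  exact ⟨hequiv, φ, β, hquot, hφ, hfib, hone, hmul, hcont, hβ,
    fun _ hne hcl hinv => hY.eq_univ_of_semiconj hφ.1 hsurj hβ hne hcl hinv⟩

/-- collapsing the closures of the complementary intervals of the
unique minimal set `Y` of a Denjoy action yields an equivalence relation whose
quotient is the circle (via a monotone degree-one quotient map `φ` whose fibres are
exactly the equivalence classes), and the action descends along `φ` to a minimal
action on the quotient circle. -/
theorem statement5 (G : Type*) [Group G] [Countable G] [Infinite G] [MulAction G T1]
    (hD : IsDenjoy G) (Y : Set T1) (hY : IsMinimalSet G Y)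
    (hYuniq : ∀ Z : Set T1, IsMinimalSet G Z → Z = Y) (hYproper : Y ≠ Set.univ) :
    Equivalence (fun x y : T1 => x = y ∨ ∃ z ∈ Yᶜ,
        x ∈ closure (connectedComponentIn Yᶜ z) ∧
        y ∈ closure (connectedComponentIn Yᶜ z)) ∧
    ∃ (φ : T1 → T1) (β : G → T1 → T1),
      Topology.IsQuotientMap φ ∧
      MonotoneDegreeOne φ ∧
      (∀ x y : T1, (x = y ∨ ∃ z ∈ Yᶜ,
          x ∈ closure (connectedComponentIn Yᶜ z) ∧
          y ∈ closure (connectedComponentIn Yᶜ z)) ↔ φ x = φ y) ∧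
      (∀ x : T1, β 1 x = x) ∧
      (∀ (g h : G) (x : T1), β (g * h) x = β g (β h x)) ∧
      (∀ g : G, Continuous (β g)) ∧
      (∀ (g : G) (x : T1), φ (g • x) = β g (φ x)) ∧
      (∀ Z : Set T1, Z.Nonempty → IsClosed Z →
        (∀ g : G, ∀ x ∈ Z, β g x ∈ Z) → Z = Set.univ) := by
  have : ContinuousConstSMul G T1 := ⟨hD.1.1⟩
  exact statement5_general hY
    ((hD.2.2 _).mono (range_subset_iff.2 fun g => hY.2.2.1 g _ hY.1.some_mem))
end
end

section
/- Let J be an ideal in a unital C*-algebra A with quotient B = A/J. Suppose J has stable rank one, B has stable rank one, and the index map K₁(B) → K₀(J) in the six-term exact sequence vanishes. Then A has stable rank one. -/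
/-!
Write `L` for the set of elements of `B` that are images of invertible elements of `A`.  If every
invertible of `B` lies in `L`, then `A` has stable rank one: any `a` is close to some `a'` with
`π a'` invertible, and dividing `a'` by an invertible lift of `π a'` leaves an element of `1 + J`,
which is a limit of invertibles.

By polar decomposition an invertible of `B` is `u * exp h` with `u` unitary, and `exp h` lies in
`L` because `h` lifts.  Vanishing of the index map joins some `u ⊕ 1ₖ` to the image of a unitary,
and the liftable units of a matrix algebra over `B` form an open, hence closed, subgroup, so
`u ⊕ 1ₖ` has an invertible lift.  The summand `1ₖ` is then removed one row at a time: since `J` has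
stable rank one, a row operation over `A` makes the corner entry of the lift invertible, and the
Schur complement of that corner is an invertible lift of the smaller matrix.
-/


noncomputable section

/-- A unital normed ring has stable rank one if its invertible elements are dense. -/
def StableRankOne (R : Type*) [NormedRing R] : Prop :=
  Dense {x : R | IsUnit x}

/-- The (non-unital) kernel ideal `J = ker π` has stable rank one: invertibles of the
unitisation `J + ℂ1 ⊆ A` are dense in it.  (Since `A` is unital and `J` is a closed
ideal, invertibility in `J + ℂ1` agrees with invertibility in `A`.) -/
def KernelStableRankOne {A B : Type*} [NormedRing A] [NormedAlgebra ℂ A]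
    [NormedRing B] [NormedAlgebra ℂ B] [StarRing A] [StarRing B]
    (π : A →⋆ₐ[ℂ] B) : Prop :=
  ∀ a : A, π a = 0 → ∀ (lam : ℂ) (ε : ℝ), 0 < ε →
    ∃ (b : A) (mu : ℂ), π b = 0 ∧ IsUnit (b + mu • (1 : A)) ∧
      ‖(a + lam • (1 : A)) - (b + mu • (1 : A))‖ < ε

/-- The index map `δ : K₁(B) → K₀(J)` of the extension `0 → ker π → A → B → 0`
vanishes.  We use the standard operational reformulation: for every unitary `u` over
`B`, some stabilisation `u ⊕ 1ₖ` is homotopic, through unitaries over `B`, to the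
image of a unitary over `A`.  (`δ([u]) = 0` iff `[u]` lies in the image of
`K₁(A) → K₁(B)`.) -/
def IndexMapVanishes {A B : Type*} [NormedRing A] [NormedAlgebra ℂ A]
    [NormedRing B] [NormedAlgebra ℂ B] [StarRing A] [StarRing B]
    (π : A →⋆ₐ[ℂ] B) : Prop :=
  ∀ (n : ℕ) (u : Matrix (Fin n) (Fin n) B), u ∈ unitary (Matrix (Fin n) (Fin n) B) →
    ∃ (k : ℕ) (v : Matrix (Fin (n + k)) (Fin (n + k)) A),
      v ∈ unitary (Matrix (Fin (n + k)) (Fin (n + k)) A) ∧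
      ∃ f : ℝ → Matrix (Fin (n + k)) (Fin (n + k)) B,
        Continuous f ∧
        (∀ t : ℝ, f t ∈ unitary (Matrix (Fin (n + k)) (Fin (n + k)) B)) ∧
        f 0 = v.map π ∧
        f 1 = Matrix.reindex finSumFinEquiv finSumFinEquiv
          (Matrix.fromBlocks u 0 0 (1 : Matrix (Fin k) (Fin k) B))

section LiftableUnits

variable {R S F : Type*} [Monoid R] [Monoid S] [FunLike F R S] [MonoidHomClass F R S]

/-- The submonoid of those elements of `S` that are the image under `f` of an invertible element
of `R`.  It consists of units, but is taken as a submonoid of `S` because it is compared with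
subsets of `S` in the topology of `S`. -/
def liftableUnits (f : F) : Submonoid S :=
  (IsUnit.submonoid R).map f

lemma mem_units_liftableUnits {f : F} {u : Sˣ} :
    u ∈ (liftableUnits f).units ↔ (u : S) ∈ liftableUnits f := by
  refine ⟨fun hu => hu.1, fun hu => ⟨hu, ?_⟩⟩
  obtain ⟨_, ⟨r, rfl⟩, hr⟩ := hu
  have hur : u = Units.map (f : R →* S) r := Units.ext hr.symm
  exact ⟨↑r⁻¹, r⁻¹.isUnit, by simp [hur]⟩

lemma map_mem_liftableUnits {R' S' F' G H : Type*} [Monoid R'] [Monoid S']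
    [FunLike F' R' S'] [MonoidHomClass F' R' S'] [FunLike G R R'] [MonoidHomClass G R R']
    [FunLike H S S'] {f : F} {f' : F'} (g : G) (h : H) (comm : ∀ r, h (f r) = f' (g r))
    {s : S} (hs : s ∈ liftableUnits f) : h s ∈ liftableUnits f' := by
  obtain ⟨r, hr, rfl⟩ := hs
  exact ⟨g r, hr.map g, (comm r).symm⟩

variable [TopologicalSpace R] [TopologicalSpace S]

lemma isOpen_liftableUnits [IsOpenUnits R] {f : F} (hf : IsOpenMap f) :
    IsOpen (liftableUnits f : Set S) :=
  hf _ IsOpenUnits.isOpenEmbedding_unitsVal.isOpen_range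

lemma mem_subgroup_of_isOpen_of_preconnectedSpace {G X : Type*} [Group G] [TopologicalSpace G]
    [SeparatelyContinuousMul G] {H : Subgroup G} (hH : IsOpen (H : Set G)) [TopologicalSpace X]
    [PreconnectedSpace X] {γ : X → G} (hγ : Continuous γ) {x : X} (hx : γ x ∈ H) (y : X) :
    γ y ∈ H := by
  have hclopen : IsClopen (γ ⁻¹' H) := ⟨(H.isClosed_of_isOpen hH).preimage hγ, hH.preimage hγ⟩
  exact Set.eq_univ_iff_forall.1 (hclopen.eq_univ ⟨x, hx⟩) y

lemma continuous_unitary_toUnits [StarMul S] [ContinuousStar S] :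
    Continuous (Unitary.toUnits : unitary S → Sˣ) :=
  Units.continuous_iff.2 ⟨continuous_subtype_val, continuous_star.comp continuous_subtype_val⟩

lemma mem_liftableUnits_of_unitary_path [IsOpenUnits R] [ContinuousMul S] [StarMul S]
    [ContinuousStar S] {X : Type*} [TopologicalSpace X] [PreconnectedSpace X] {f : F}
    (hf : IsOpenMap f) {γ : X → S} (hγ : Continuous γ) (hγu : ∀ t, γ t ∈ unitary S) {x : X}
    (hx : γ x ∈ liftableUnits f) (y : X) : γ y ∈ liftableUnits f := by
  have hopen := Submonoid.isOpen_units (isOpen_liftableUnits hf)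
  have hcont : Continuous fun t => Unitary.toUnits (⟨γ t, hγu t⟩ : unitary S) :=
    continuous_unitary_toUnits.comp (hγ.subtype_mk hγu)
  exact mem_units_liftableUnits.1 <|
    mem_subgroup_of_isOpen_of_preconnectedSpace hopen hcont (mem_units_liftableUnits.2 hx) y

lemma dense_isUnit_of_liftableUnits [SeparatelyContinuousMul R] {f : F} (hf : IsOpenMap f)
    (hker : ∀ r, f r = 1 → r ∈ closure {x : R | IsUnit x})
    (hlift : ∀ s : S, IsUnit s → s ∈ liftableUnits f) (hS : Dense {s : S | IsUnit s}) :
    Dense {r : R | IsUnit r} := by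
  refine dense_closure.1 ((hS.preimage hf).mono fun r hr => ?_)
  obtain ⟨_, ⟨u, rfl⟩, hu⟩ := hlift (f r) hr
  have hclosure : u⁻¹.val * r ∈ closure {x : R | IsUnit x} := by
    refine hker _ ?_
    rw [map_mul, ← hu, ← map_mul, Units.inv_mul, map_one]
  have hmul : Set.MapsTo (fun x => u.val * x) {x : R | IsUnit x} {x : R | IsUnit x} :=
    fun x hx => u.isUnit.mul hx
  simpa using map_mem_closure (continuous_const_mul u.val) hclosure hmul

end LiftableUnits

section BlockMatrices

open Matrix

variable {R S m n : Type*} [Fintype m] [DecidableEq m] [Fintype n] [DecidableEq n]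

lemma isUnit_of_isUnit_fromBlocks_diagonal [Semiring R] {A : Matrix m m R} {D : Matrix n n R}
    (h : IsUnit (fromBlocks A 0 0 D)) : IsUnit A := by
  obtain ⟨V, hAV, hVA⟩ := isUnit_iff_exists.1 h
  rw [← fromBlocks_toBlocks V, fromBlocks_multiply, ← fromBlocks_one, fromBlocks_inj] at hAV hVA
  exact isUnit_iff_exists.2 ⟨V.toBlocks₁₁, by simpa using hAV.1, by simpa using hVA.1⟩

variable [Ring R]

lemma isUnit_fromBlocks_one_zero₁₂ (C : Matrix n m R) :
    IsUnit (fromBlocks (1 : Matrix m m R) 0 C (1 : Matrix n n R)) :=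
  isUnit_iff_exists.2 ⟨fromBlocks 1 0 (-C) 1, by simp [fromBlocks_multiply],
    by simp [fromBlocks_multiply]⟩

lemma isUnit_fromBlocks_one_zero₂₁ (B : Matrix m n R) :
    IsUnit (fromBlocks (1 : Matrix m m R) B 0 (1 : Matrix n n R)) :=
  isUnit_iff_exists.2 ⟨fromBlocks 1 (-B) 0 1, by simp [fromBlocks_multiply],
    by simp [fromBlocks_multiply]⟩

lemma isUnit_schurComplement_of_isUnit_fromBlocks {A : Matrix m m R} {B : Matrix m n R}
    {C : Matrix n m R} {D : (Matrix n n R)ˣ} (h : IsUnit (fromBlocks A B C D.val)) :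
    IsUnit (A - B * D⁻¹.val * C) := by
  refine isUnit_of_isUnit_fromBlocks_diagonal (D := D.val) ?_
  have hfactor : fromBlocks (A - B * D⁻¹.val * C) 0 0 D.val =
      fromBlocks 1 (-(B * D⁻¹.val)) 0 1 * fromBlocks A B C D.val *
        fromBlocks 1 0 (-(D⁻¹.val * C)) 1 := by
    have hBD : B * D⁻¹.val * D.val = B := by simp [Matrix.mul_assoc]
    have hDC : D.val * (D⁻¹.val * C) = C := by simp [← Matrix.mul_assoc]
    simp [fromBlocks_multiply, sub_eq_add_neg, hBD, hDC]
  rw [hfactor]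
  exact ((isUnit_fromBlocks_one_zero₂₁ _).mul h).mul (isUnit_fromBlocks_one_zero₁₂ _)

lemma exists_units_isUnit_add_mul [TopologicalSpace R] [IsTopologicalRing R] [IsOpenUnits R]
    {x y r : R} (hx : x ∈ closure {x : R | IsUnit x}) (h : r + x * y = 1) :
    ∃ q : Rˣ, IsUnit (r + q * y) := by
  have hopen : IsOpen {q : R | IsUnit (r + q * y)} :=
    IsOpenUnits.isOpenEmbedding_unitsVal.isOpen_range.preimage
      (by fun_prop : Continuous fun q : R => r + q * y)
  obtain ⟨_, hq, q, rfl⟩ := mem_closure_iff.1 hx _ hopen (by simp [h])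
  exact ⟨q, hq⟩

lemma mem_liftableUnits_of_fromBlocks_one [Ring S] [TopologicalSpace R] [IsTopologicalRing R]
    [IsOpenUnits (Matrix n n R)] {f : R →+* S}
    (hker : ∀ Y : Matrix n n R, f.mapMatrix Y = 1 → Y ∈ closure {Y : Matrix n n R | IsUnit Y})
    {b : Matrix m m S}
    (hb : fromBlocks b 0 0 (1 : Matrix n n S) ∈ liftableUnits f.mapMatrix) :
    b ∈ liftableUnits f.mapMatrix := by
  obtain ⟨W, hW, hWb⟩ := hb
  obtain ⟨V, -, hVW⟩ := isUnit_iff_exists.1 hW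
  rw [← fromBlocks_toBlocks W, RingHom.mapMatrix_apply, fromBlocks_map, fromBlocks_inj] at hWb
  obtain ⟨hW₁₁, hW₁₂, -, hW₂₂⟩ := hWb
  have hrow : V.toBlocks₂₁ * W.toBlocks₁₂ + V.toBlocks₂₂ * W.toBlocks₂₂ = 1 := by
    rw [← fromBlocks_toBlocks W, ← fromBlocks_toBlocks V, fromBlocks_multiply, ← fromBlocks_one,
      fromBlocks_inj] at hVW
    exact hVW.2.2.2
  have hV₂₂ : f.mapMatrix V.toBlocks₂₂ = 1 := by
    have := congrArg (Matrix.map · f) hrow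
    simpa [Matrix.map_add, Matrix.map_mul, hW₁₂, hW₂₂] using this
  obtain ⟨Q, G, hG⟩ := exists_units_isUnit_add_mul (hker _ hV₂₂) hrow
  -- `T` is the row operation: adding `T` times the upper row to the lower makes the corner a unit.
  set T : Matrix n m R := Q⁻¹.val * V.toBlocks₂₁ with hT
  have hcorner : T * W.toBlocks₁₂ + W.toBlocks₂₂ = (Q⁻¹ * G).val := by
    rw [Units.val_mul, hG, mul_add, Units.inv_mul_cancel_left, hT, Matrix.mul_assoc]
  have hTW : IsUnit (fromBlocks W.toBlocks₁₁ W.toBlocks₁₂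
      (T * W.toBlocks₁₁ + W.toBlocks₂₁) (Q⁻¹ * G).val) := by
    have := (isUnit_fromBlocks_one_zero₁₂ T).mul hW
    rwa [← fromBlocks_toBlocks W, fromBlocks_multiply, Matrix.one_mul, Matrix.one_mul,
      Matrix.one_mul, Matrix.one_mul, Matrix.zero_mul, Matrix.zero_mul, add_zero, add_zero,
      hcorner] at this
  refine ⟨_, isUnit_schurComplement_of_isUnit_fromBlocks hTW, ?_⟩
  simp [Matrix.map_sub, Matrix.map_mul, hW₁₁, hW₁₂]

end BlockMatrices

section Matrices

open Matrix

variable {R S m n : Type*}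

lemma isOpenMap_matrix_map [Finite m] [Finite n] [TopologicalSpace R] [TopologicalSpace S]
    {f : R → S} (hf : IsOpenMap f) : IsOpenMap fun M : Matrix m n R => M.map f :=
  IsOpenMap.piMap (fun _ => IsOpenMap.piMap (fun _ => hf) (by simp)) (by simp)

variable [Fintype m] [DecidableEq m] [Fintype n] [DecidableEq n]

lemma reindex_mem_liftableUnits [Semiring R] [Semiring S] {f : R →+* S} (e : m ≃ n)
    {b : Matrix m m S} (hb : b ∈ liftableUnits f.mapMatrix) :
    reindex e e b ∈ liftableUnits f.mapMatrix :=
  map_mem_liftableUnits (f := f.mapMatrix) (reindexRingEquiv R e) (reindexRingEquiv S e)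
    (fun _ => rfl) hb

attribute [local instance] Matrix.linftyOpNormedRing in
instance isOpenUnits_matrix [NormedRing R] [CompleteSpace R] : IsOpenUnits (Matrix n n R) where
  isOpenEmbedding_unitsVal :=
    -- Completeness is stated for the uniformity of the operator norm, not for `Matrix`'s own.
    have : @CompleteSpace (Matrix n n R) PseudoMetricSpace.toUniformSpace :=
      inferInstanceAs (CompleteSpace (n → n → R))
    Units.isOpenEmbedding_val

lemma mem_liftableUnits_of_fromBlocks_one_fin [NormedRing R] [CompleteSpace R] [Ring S]
    {f : R →+* S} (hker : ∀ r, f r = 1 → r ∈ closure {x : R | IsUnit x}) {b : Matrix m m S}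
    {k : ℕ} (hb : fromBlocks b 0 0 (1 : Matrix (Fin k) (Fin k) S) ∈ liftableUnits f.mapMatrix) :
    b ∈ liftableUnits f.mapMatrix := by
  have hker₁ (Y : Matrix (Fin 1) (Fin 1) R) (hY : f.mapMatrix Y = 1) :
      Y ∈ closure {Y : Matrix (Fin 1) (Fin 1) R | IsUnit Y} := by
    let e : Matrix (Fin 1) (Fin 1) R ≃+* R := uniqueRingEquiv
    have hcont : Continuous e.symm := continuous_matrix fun _ _ => continuous_id
    have he : f (e Y) = 1 := congrFun (congrFun hY 0) 0
    simpa using map_mem_closure hcont (hker _ he) fun x hx => hx.map e.symm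
  induction k with
  | zero =>
    convert reindex_mem_liftableUnits (Equiv.sumEmpty m (Fin 0)) hb
    ext i j
    simp
  | succ k ih =>
    let e : m ⊕ Fin (k + 1) ≃ (m ⊕ Fin k) ⊕ Fin 1 :=
      ((Equiv.refl m).sumCongr finSumFinEquiv.symm).trans (Equiv.sumAssoc m (Fin k) (Fin 1)).symm
    have hsplit : reindex e e (fromBlocks b 0 0 1) =
        fromBlocks (fromBlocks b 0 0 (1 : Matrix (Fin k) (Fin k) S)) 0 0 1 := by
      ext ((i | i) | i) ((j | j) | j) <;> simp [e, one_apply, Fin.ext_iff] <;> omega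
    exact ih (mem_liftableUnits_of_fromBlocks_one hker₁ (hsplit ▸ reindex_mem_liftableUnits e hb))

end Matrices

lemma exists_unitary_mul_exp_of_isUnit {B : Type*} [CStarAlgebra B] {b : B} (hb : IsUnit b) :
    ∃ u ∈ unitary B, ∃ h : B, IsSelfAdjoint h ∧ b = u * NormedSpace.exp h := by
  let _ := CStarAlgebra.spectralOrder B
  have := CStarAlgebra.spectralOrderedRing B
  have hsq : CFC.abs b * CFC.abs b = star b * b := CFC.abs_mul_abs b
  have hself : star (CFC.abs b) = CFC.abs b := (CFC.abs_nonneg b).star_eq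
  have habs : IsUnit (CFC.abs b) :=
    (CFC.isUnit_sqrt_iff _ (star_mul_self_nonneg b)).2 (hb.star.mul hb)
  have hexp : NormedSpace.exp (CFC.log (CFC.abs b)) = CFC.abs b :=
    CFC.exp_log _ (habs.isStrictlyPositive (CFC.abs_nonneg b))
  obtain ⟨p, hp⟩ := habs
  rw [← hp] at hsq hself hexp
  have hpinv : star (↑p⁻¹ : B) = ↑p⁻¹ := by
    rw [← Units.coe_star_inv, (Units.ext hself : star p = p)]
  have hu : star (b * ↑p⁻¹) * (b * ↑p⁻¹) = 1 := by
    calc star (b * ↑p⁻¹) * (b * ↑p⁻¹) = ↑p⁻¹ * (star b * b) * ↑p⁻¹ := by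
          rw [star_mul, hpinv]; simp only [mul_assoc]
      _ = 1 := by rw [← hsq]; simp
  refine ⟨b * ↑p⁻¹, (hb.mul p⁻¹.isUnit).mem_unitary_of_star_mul_self hu, CFC.log p, .log, ?_⟩
  rw [hexp, Units.inv_mul_cancel_right]

section Extension

open Matrix

variable {A B : Type*} [NormedRing A] [StarRing A] [NormedAlgebra ℂ A] [NormedRing B] [StarRing B]
  [NormedAlgebra ℂ B] {π : A →⋆ₐ[ℂ] B}

lemma KernelStableRankOne.mem_closure_isUnit (hJ : KernelStableRankOne π) {a : A} (ha : π a = 1) :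
    a ∈ closure {x : A | IsUnit x} := by
  refine Metric.mem_closure_iff.2 fun ε hε => ?_
  obtain ⟨b, mu, -, hu, hlt⟩ := hJ (a - 1) (by simp [ha]) 1 ε hε
  exact ⟨_, hu, by simpa [dist_eq_norm] using hlt⟩

variable [CompleteSpace A]

lemma IndexMapVanishes.exists_fromBlocks_mem_liftableUnits [ContinuousStar B]
    (hidx : IndexMapVanishes π) (hπ : IsOpenMap π) {n : ℕ} {u : Matrix (Fin n) (Fin n) B}
    (hu : u ∈ unitary (Matrix (Fin n) (Fin n) B)) :
    ∃ k, fromBlocks u 0 0 (1 : Matrix (Fin k) (Fin k) B) ∈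
      liftableUnits (π : A →+* B).mapMatrix := by
  obtain ⟨k, v, hv, γ, hγ, hγu, hγ₀, hγ₁⟩ := hidx n u hu
  have hγ₀' : γ 0 ∈ liftableUnits (π : A →+* B).mapMatrix :=
    ⟨v, Unitary.isUnit_coe (U := ⟨v, hv⟩), hγ₀.symm⟩
  have hγ₁' := mem_liftableUnits_of_unitary_path (isOpenMap_matrix_map hπ) hγ hγu hγ₀' 1
  refine ⟨k, ?_⟩
  simpa [hγ₁] using reindex_mem_liftableUnits finSumFinEquiv.symm hγ₁'

lemma unitary_le_liftableUnits [ContinuousStar B] (hπ : IsOpenMap π) (hJ : KernelStableRankOne π)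
    (hidx : IndexMapVanishes π) : unitary B ≤ liftableUnits (π : A →+* B) := by
  intro u hu
  let e : Matrix (Fin 1) (Fin 1) B ≃⋆+* B :=
    { uniqueRingEquiv with map_star' := fun _ => rfl }
  have hu' : e.symm u ∈ unitary (Matrix (Fin 1) (Fin 1) B) := Unitary.map_mem e.symm hu
  obtain ⟨k, hk⟩ := hidx.exists_fromBlocks_mem_liftableUnits hπ hu'
  have hlift := mem_liftableUnits_of_fromBlocks_one_fin (fun _ => hJ.mem_closure_isUnit) hk
  let eA : Matrix (Fin 1) (Fin 1) A ≃+* A := uniqueRingEquiv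
  simpa using map_mem_liftableUnits (f' := (π : A →+* B)) eA e (fun _ => rfl) hlift

lemma exp_mem_liftableUnits (hsurj : Function.Surjective π) (hcont : Continuous π) (h : B) :
    NormedSpace.exp h ∈ liftableUnits (π : A →+* B) := by
  let : NormedAlgebra ℚ A := NormedAlgebra.restrictScalars ℚ ℂ A
  let : NormedAlgebra ℚ B := NormedAlgebra.restrictScalars ℚ ℂ B
  obtain ⟨a, rfl⟩ := hsurj h
  exact ⟨NormedSpace.exp a, NormedSpace.isUnit_exp a, NormedSpace.map_exp π hcont a⟩

end Extension

theorem statement16_general {A B : Type*}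
    [NormedRing A] [StarRing A] [NormedAlgebra ℂ A] [CompleteSpace A]
    [NormedRing B] [StarRing B] [CStarRing B] [NormedAlgebra ℂ B]
    [StarModule ℂ B] [CompleteSpace B]
    (π : A →⋆ₐ[ℂ] B) (hπ : Function.Surjective π) (hπcont : Continuous π)
    (hJ : KernelStableRankOne π) (hB : StableRankOne B)
    (hidx : IndexMapVanishes π) :
    StableRankOne A := by
  let : CStarAlgebra B := {}
  have hopen : IsOpenMap π := ContinuousLinearMap.isOpenMap ⟨π.toAlgHom.toLinearMap, hπcont⟩ hπ
  have hlift (b : B) (hb : IsUnit b) : b ∈ liftableUnits (π : A →+* B) := by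
    obtain ⟨u, hu, h, -, rfl⟩ := exists_unitary_mul_exp_of_isUnit hb
    exact mul_mem (unitary_le_liftableUnits hopen hJ hidx hu) (exp_mem_liftableUnits hπ hπcont h)
  exact dense_isUnit_of_liftableUnits hopen (fun _ => hJ.mem_closure_isUnit) hlift hB

/-- Nistor's lemma: for an extension `0 → J → A → B → 0` of a
unital C*-algebra `A` with quotient `B = A/J`, if `J` and `B` have stable rank one
and the index map `K₁(B) → K₀(J)` vanishes, then `A` has stable rank one. -/
theorem statement16 {A B : Type*}
    [NormedRing A] [StarRing A] [CStarRing A] [NormedAlgebra ℂ A]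
    [StarModule ℂ A] [CompleteSpace A]
    [NormedRing B] [StarRing B] [CStarRing B] [NormedAlgebra ℂ B]
    [StarModule ℂ B] [CompleteSpace B]
    (π : A →⋆ₐ[ℂ] B) (hπ : Function.Surjective π) (hπcont : Continuous π)
    (hJ : KernelStableRankOne π) (hB : StableRankOne B)
    (hidx : IndexMapVanishes π) :
    StableRankOne A :=
  statement16_general π hπ hπcont hJ hB hidx
end
end

section
/- Let G be a countably infinite discrete abelian group with a free Denjoy action on 𝕋, and let A = C(𝕋) ⋊ G with unique tracial state τ. Then the trace ideal J_τ = {a ∈ A : τ(a*a) = 0} equals the ideal C₀(𝕋\Y) ⋊ G, and this is the unique maximal (proper closed two-sided) ideal of A. -/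
open MeasureTheory Topology Filter Set Function

noncomputable section

variable (G : Type*) [Group G] [MulAction G T1]

variable {G}

/-- A model of the (reduced) crossed product `C(𝕋) ⋊ G`: a unital C*-algebra `A`
together with a unital embedding of `C(𝕋)`, a unitary representation of `G`
satisfying the covariance relation, such that these generate `A`, and a faithful
conditional expectation onto `C(𝕋)` killing the off-diagonal terms.  (These data
characterise the reduced crossed product up to isomorphism.) -/
structure CrossedProductData (G : Type*) [Group G] [MulAction G T1] (A : Type*)
    [NormedRing A] [StarRing A] [CStarRing A] [NormedAlgebra ℂ A]
    [StarModule ℂ A] [CompleteSpace A] where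
  cont_smul : ∀ g : G, Continuous fun x : T1 => g • x
  iota : C(T1, ℂ) →⋆ₐ[ℂ] A
  iota_injective : Function.Injective iota
  iota_isometry : ∀ f : C(T1, ℂ), ‖iota f‖ = ‖f‖
  lam : G → A
  lam_unitary : ∀ g : G, lam g ∈ unitary A
  lam_one : lam 1 = 1
  lam_mul : ∀ g h : G, lam (g * h) = lam g * lam h
  covariance : ∀ (g : G) (f : C(T1, ℂ)),
    lam g * iota f * star (lam g) =
      iota (f.comp ⟨fun x : T1 => g⁻¹ • x, cont_smul g⁻¹⟩)
  generates : closure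
      (Submodule.span ℂ {a : A | ∃ (f : C(T1, ℂ)) (g : G), a = iota f * lam g} :
        Set A) = Set.univ
  E : A →ₗ[ℂ] C(T1, ℂ)
  E_cont : Continuous E
  E_faithful : ∀ a : A, E (star a * a) = 0 → a = 0
  E_diag : ∀ f : C(T1, ℂ), E (iota f) = f
  E_off : ∀ (f : C(T1, ℂ)) (g : G), g ≠ 1 → E (iota f * lam g) = 0

/-- A tracial state on a unital C*-algebra. -/
def IsTracialState {A : Type*} [NormedRing A] [StarRing A] [CStarRing A]
    [NormedAlgebra ℂ A] [StarModule ℂ A] [CompleteSpace A]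
    (τ : A →ₗ[ℂ] ℂ) : Prop :=
  Continuous τ ∧ τ 1 = 1 ∧ (∀ a b : A, τ (a * b) = τ (b * a)) ∧
    ∀ a : A, ∃ r : ℝ, 0 ≤ r ∧ τ (star a * a) = (r : ℂ)

/-- A closed two-sided ideal of `A`, as a set. -/
def IsClosedTwoSidedIdeal {A : Type*} [NormedRing A] (S : Set A) : Prop :=
  IsClosed S ∧ (0 : A) ∈ S ∧ (∀ a ∈ S, ∀ b ∈ S, a + b ∈ S) ∧
    (∀ a ∈ S, -a ∈ S) ∧ ∀ a ∈ S, ∀ x : A, x * a ∈ S ∧ a * x ∈ S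

/-!
A closed two-sided ideal `S` of `C(𝕋) ⋊ G` is determined by the ideal `S ∩ C(𝕋)` of functions
in it. Freeness makes `S` stable under `a ↦ E(a)`: compressing `a` by a partition of unity
subordinate to a cover by sets that finitely many group elements move off themselves kills
any finite number of nonzero Fourier terms. Amenability recovers `a` from its Fourier terms
`E(a λ_g*) λ_g`, as the limit of Fejér sums taken along Følner sets.

If `S` is proper, the common zero set of `S ∩ C(𝕋)` is closed, invariant and nonempty, so it
contains `Y`; thus `S ∩ C(𝕋) ⊆ C₀(𝕋 \ Y)`. Conversely, freeness and infinitude of `G` force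
the trace to vanish on `C₀(𝕋 \ Y)`: each point outside `Y` has a neighbourhood, a component of
`𝕋 \ Y`, that only finitely many group elements fail to move off itself, so a function
supported there has arbitrarily many disjoint translates, all of the same trace. Hence the
functions in the trace ideal are exactly `C₀(𝕋 \ Y)`, the largest possible for a proper ideal.
-/

section Foelner

open scoped Pointwise

/-- The Følner condition for a discrete group: every finite set `K` admits finite nonempty sets
`F` almost invariant under left translation by the elements of `K`. Among discrete groups it
characterises the amenable ones. -/
def FoelnerCondition (H : Type*) [Group H] : Prop :=
  open scoped Classical in
  ∀ (K : Finset H) (ε : ℝ), 0 < ε →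
    ∃ F : Finset H, F.Nonempty ∧ ∀ k ∈ K, (1 - ε) * F.card ≤ (F ∩ k • F).card

theorem exists_succ_le_mul_of_le_pow {u : ℕ → ℝ} {d : ℕ} (hu0 : 0 < u 0)
    (hu : ∀ n, u n ≤ ((n : ℝ) + 1) ^ d) {ε : ℝ} (hε : 0 < ε) :
    ∃ n, u (n + 1) ≤ (1 + ε) * u n := by
  by_contra! hgrowth
  have hgeom (n : ℕ) : u 0 * (1 + ε) ^ n ≤ u n := by
    induction n with
    | zero => simp
    | succ n ih => calc
        u 0 * (1 + ε) ^ (n + 1) = (1 + ε) * (u 0 * (1 + ε) ^ n) := by ring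
        _ ≤ (1 + ε) * u n := by gcongr
        _ ≤ u (n + 1) := (hgrowth n).le
  have hlim : Tendsto (fun n : ℕ ↦ ((n + 1 : ℕ) : ℝ) ^ d / (1 + ε) ^ (n + 1)) atTop (𝓝 0) :=
    (tendsto_add_atTop_iff_nat 1).2
      (tendsto_pow_const_div_const_pow_of_one_lt d (by linarith : 1 < 1 + ε))
  obtain ⟨n, hn⟩ := (hlim.eventually_lt_const (show 0 < u 0 / (1 + ε) by positivity)).exists
  rw [pow_succ', ← div_div, div_right_comm, div_lt_div_iff_of_pos_right (by linarith),
    div_lt_iff₀ (by positivity)] at hn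
  push_cast at hn
  linarith [hgeom n, hu n]

open scoped Classical in
theorem foelnerCondition_of_card_pow_le {H : Type*} [Group H]
    (hgrowth : ∀ K : Finset H, ∃ d : ℕ, ∀ n : ℕ, (K ^ n).card ≤ (n + 1) ^ d) :
    FoelnerCondition H := by
  intro K ε hε
  set B := insert 1 K
  have hB : (1 : H) ∈ B := Finset.mem_insert_self 1 K
  obtain ⟨d, hd⟩ := hgrowth B
  obtain ⟨n, hn⟩ : ∃ n, ((B ^ (n + 1)).card : ℝ) ≤ (1 + ε) * (B ^ n).card :=
    exists_succ_le_mul_of_le_pow (u := fun n ↦ (B ^ n).card) (by simp)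
      (fun n ↦ by exact_mod_cast hd n) hε
  refine ⟨B ^ (n + 1), ⟨1, Finset.one_mem_pow hB⟩, fun k hk ↦ ?_⟩
  have hsub : k • B ^ n ⊆ B ^ (n + 1) ∩ k • B ^ (n + 1) := by
    refine Finset.subset_inter ?_
      (Finset.smul_finset_subset_smul_finset (Finset.pow_subset_pow_right hB n.le_succ))
    rw [pow_succ']
    exact Finset.smul_finset_subset_mul (Finset.mem_insert_of_mem hk)
  calc (1 - ε) * ((B ^ (n + 1)).card : ℝ) ≤ (B ^ n).card := by
        rcases le_or_gt ε 1 with hε1 | hε1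
        · nlinarith [mul_le_mul_of_nonneg_left hn (sub_nonneg.2 hε1),
            mul_nonneg (sq_nonneg ε) (Nat.cast_nonneg (α := ℝ) (B ^ n).card)]
        · exact (mul_nonpos_of_nonpos_of_nonneg (by linarith) (Nat.cast_nonneg _)).trans
            (Nat.cast_nonneg _)
    _ ≤ (B ^ (n + 1) ∩ k • B ^ (n + 1)).card := by
        rw [← Finset.card_smul_finset k (B ^ n)]
        exact_mod_cast Finset.card_le_card hsub

theorem card_pow_le_succ_pow_card {H : Type*} [CommMonoid H] [DecidableEq H] (K : Finset H)
    (n : ℕ) : (K ^ n).card ≤ (n + 1) ^ K.card := by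
  have hsub : K ^ n ⊆ (Finset.univ : Finset (K → Fin (n + 1))).image
      fun e ↦ ∏ k : K, (k : H) ^ (e k : ℕ) := by
    intro x hx
    obtain ⟨f, rfl⟩ := Finset.mem_pow.1 hx
    let multiplicity (k : K) : ℕ := (Finset.univ.filter fun i ↦ f i = k).card
    have hle (k : K) : multiplicity k < n + 1 :=
      Nat.lt_succ_of_le ((Finset.card_le_univ _).trans_eq (Fintype.card_fin n))
    have hfiber (k : K) : ∏ i with f i = k, (f i : H) = (k : H) ^ multiplicity k :=
      Finset.prod_eq_pow_card fun i hi ↦ congrArg Subtype.val (Finset.mem_filter.1 hi).2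
    refine Finset.mem_image.2 ⟨fun k ↦ ⟨multiplicity k, hle k⟩, Finset.mem_univ _, ?_⟩
    rw [List.prod_ofFn, ← Finset.prod_fiberwise Finset.univ f]
    exact Finset.prod_congr rfl fun k _ ↦ (hfiber k).symm
  calc (K ^ n).card ≤ _ := Finset.card_le_card hsub
    _ ≤ _ := Finset.card_image_le
    _ = (n + 1) ^ K.card := by simp

open scoped Classical in
theorem foelnerCondition_of_commGroup (H : Type*) [CommGroup H] : FoelnerCondition H :=
  foelnerCondition_of_card_pow_le fun K ↦ ⟨K.card, card_pow_le_succ_pow_card K⟩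

end Foelner

section PositiveMap

theorem norm_map_le_of_isSelfAdjoint {A B : Type*} [CStarAlgebra A] [PartialOrder A]
    [StarOrderedRing A] [CStarAlgebra B] [PartialOrder B] [StarOrderedRing B] (M : A →ₚ[ℂ] B)
    (hM : M 1 = 1) {a : A} (ha : IsSelfAdjoint a) : ‖M a‖ ≤ ‖a‖ := by
  nontriviality B
  have hMalg (r : ℝ) : M (algebraMap ℝ A r) = algebraMap ℝ B r := by
    rw [Algebra.algebraMap_eq_smul_one, Algebra.algebraMap_eq_smul_one, ← Complex.coe_smul,
      map_smul, hM, Complex.coe_smul]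
  have hupper : M a ≤ algebraMap ℝ B ‖a‖ :=
    (OrderHomClass.mono M ha.le_algebraMap_norm_self).trans_eq (hMalg _)
  have hlower : algebraMap ℝ B (-‖a‖) ≤ M a := by
    rw [← hMalg, map_neg]
    exact OrderHomClass.mono M ha.neg_algebraMap_norm_le_self
  have hMa : IsSelfAdjoint (M a) := ha.map' M
  rcases CStarAlgebra.norm_or_neg_norm_mem_spectrum hMa with h | h
  · exact (le_algebraMap_iff_spectrum_le hMa).1 hupper _ h
  · exact neg_le_neg_iff.1 ((algebraMap_le_iff_le_spectrum hMa).1 hlower _ h)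

theorem norm_map_le_two_mul {A B : Type*} [CStarAlgebra A] [PartialOrder A]
    [StarOrderedRing A] [CStarAlgebra B] [PartialOrder B] [StarOrderedRing B] (M : A →ₚ[ℂ] B)
    (hM : M 1 = 1) (a : A) : ‖M a‖ ≤ 2 * ‖a‖ := calc
  ‖M a‖ = ‖M (realPart a) + Complex.I • M (imaginaryPart a)‖ := by
    rw [← map_smul, ← map_add, realPart_add_I_smul_imaginaryPart]
  _ ≤ ‖M (realPart a)‖ + ‖M (imaginaryPart a)‖ := by
    simpa [norm_smul] using norm_add_le (M (realPart a)) (Complex.I • M (imaginaryPart a))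
  _ ≤ ‖(realPart a : A)‖ + ‖(imaginaryPart a : A)‖ :=
    add_le_add (norm_map_le_of_isSelfAdjoint M hM (realPart a).2)
      (norm_map_le_of_isSelfAdjoint M hM (imaginaryPart a).2)
  _ ≤ 2 * ‖a‖ := by
    have hre : ‖(realPart a : A)‖ ≤ ‖a‖ := realPart.norm_le a
    have him : ‖(imaginaryPart a : A)‖ ≤ ‖a‖ := imaginaryPart.norm_le a
    linarith

variable {A : Type*} [NormedRing A] [StarRing A] [CStarRing A] [NormedAlgebra ℂ A]
  [StarModule ℂ A] [CompleteSpace A]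

theorem norm_map_le_two_mul_of_dense {M : A →ₗ[ℂ] A} (hMcont : Continuous M) (hM : M 1 = 1)
    {s : Set A} (hs : Dense s)
    (hpos : ∀ b ∈ s, M (star b * b) ∈ AddSubmonoid.closure (range fun x : A ↦ star x * x))
    (a : A) : ‖M a‖ ≤ 2 * ‖a‖ := by
  let : CStarAlgebra A := {}
  let := CStarAlgebra.spectralOrder A
  have := CStarAlgebra.spectralOrderedRing A
  have hsq (b : A) : 0 ≤ M (star b * b) := by
    have hclosed : IsClosed {b : A | 0 ≤ M (star b * b)} :=
      CStarAlgebra.isClosed_nonneg.preimage (hMcont.comp (continuous_star.mul continuous_id))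
    exact hclosed.closure_subset_iff.2
      (fun b hb ↦ StarOrderedRing.nonneg_iff.2 (hpos b hb)) (hs b)
  have hnonneg (b : A) (hb : 0 ≤ b) : 0 ≤ M b := by
    obtain ⟨c, rfl⟩ := CStarAlgebra.nonneg_iff_eq_star_mul_self.1 hb
    exact hsq c
  exact norm_map_le_two_mul (PositiveLinearMap.mk₀ M hnonneg) hM a

end PositiveMap

section Wandering

instance inst_s17 : LocallyConnectedSpace T1 :=
  (QuotientAddGroup.isQuotientMap_mk (N := AddSubgroup.zmultiples (1 : ℝ))).isCoinducing
    |>.locallyConnectedSpace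

theorem finite_closure_sdiff_of_ordConnected {α : Type*} [LinearOrder α] [TopologicalSpace α]
    [OrderTopology α] {s : Set α} (hs : s.OrdConnected) : (closure s \ s).Finite := by
  have hbound : closure s \ s ⊆ {b | IsLUB s b} ∪ {b | IsGLB s b} := by
    rintro b ⟨hb, hbs⟩
    by_cases hub : b ∈ upperBounds s
    · exact Or.inl (isLUB_of_mem_closure hub hb)
    refine Or.inr (isGLB_of_mem_closure (fun a ha ↦ ?_) hb)
    obtain ⟨c, hc, hbc⟩ : ∃ c ∈ s, b < c := by simpa [upperBounds] using hub
    exact le_of_not_gt fun hab ↦ hbs (hs.out ha hc ⟨hab.le, hbc.le⟩)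
  have hlub : {b | IsLUB s b}.Subsingleton := fun _ hb _ hc ↦ hb.unique hc
  have hglb : {b | IsGLB s b}.Subsingleton := fun _ hb _ hc ↦ hb.unique hc
  exact (hlub.finite.union hglb.finite).subset hbound

/-- A connected set missing the point `p` is the image of a real interval under the chart
`t ↦ (t : 𝕋)` on `[p, p + 1)`; only the endpoints of that interval can enter its closure. -/
theorem finite_closure_sdiff_of_isPreconnected {C : Set T1} (hC : IsPreconnected C)
    (hne : C ≠ univ) : (closure C \ C).Finite := by
  obtain ⟨p, hp⟩ := (ne_univ_iff_exists_notMem C).1 hne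
  obtain ⟨p, rfl⟩ := QuotientAddGroup.mk_surjective p
  have hcoe : Continuous ((↑) : ℝ → T1) := AddCircle.continuous_mk' 1
  let chart (z : T1) : ℝ := AddCircle.equivIco 1 p z
  have hchart (z : T1) : (chart z : T1) = z := (AddCircle.equivIco 1 p).symm_apply_apply z
  have hcont : ContinuousOn chart C := fun z hz ↦
    (continuous_subtype_val.continuousAt.comp (AddCircle.continuousAt_equivIco 1 p
      (ne_of_mem_of_not_mem hz hp))).continuousWithinAt
  have hbdd : Bornology.IsBounded (chart '' C) := (Metric.isBounded_Ico p (p + 1)).subset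
    (image_subset_iff.2 fun z _ ↦ (AddCircle.equivIco 1 p z).2)
  have hclosure : closure C ⊆ (↑) '' closure (chart '' C) :=
    closure_minimal (fun z hz ↦ ⟨chart z, subset_closure (mem_image_of_mem _ hz), hchart z⟩)
      (hbdd.isCompact_closure.image hcoe).isClosed
  refine ((finite_closure_sdiff_of_ordConnected (hC.image _ hcont).ordConnected).image
    ((↑) : ℝ → T1)).subset ?_
  rintro z ⟨hz, hzC⟩
  obtain ⟨t, ht, rfl⟩ := hclosure hz
  refine mem_image_of_mem _ ⟨ht, ?_⟩
  rintro ⟨w, hw, rfl⟩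
  exact hzC (by rwa [hchart])

theorem nonempty_closure_sdiff_of_isOpen {X : Type*} [TopologicalSpace X] [PreconnectedSpace X]
    {s : Set X} (hs : IsOpen s) (hne : s.Nonempty) (hne' : s ≠ univ) :
    (closure s \ s).Nonempty := by
  rw [sdiff_nonempty]
  intro hclosed
  rcases isClopen_iff.1 ⟨closure_subset_iff_isClosed.1 hclosed, hs⟩ with h | h
  exacts [hne.ne_empty h, hne' h]

theorem mapsTo_smul_connectedComponentIn {H X : Type*} [Group H] [TopologicalSpace X]
    [MulAction H X] [ContinuousConstSMul H X] {U : Set X} {g : H} (hU : MapsTo (g • ·) U U)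
    {x y : X} (hy : y ∈ connectedComponentIn U x) (hgy : g • y ∈ connectedComponentIn U x) :
    MapsTo (g • ·) (connectedComponentIn U x) (connectedComponentIn U x) := by
  have himage : (g • ·) '' connectedComponentIn U x ⊆ connectedComponentIn U (g • y) :=
    (isPreconnected_connectedComponentIn.image _
      (continuous_const_smul g).continuousOn).subset_connectedComponentIn (mem_image_of_mem _ hy)
      ((image_mono (connectedComponentIn_subset U x)).trans hU.image_subset)
  rw [← connectedComponentIn_eq hgy] at himage
  exact mapsTo_iff_image_subset.2 himage

/-- A group element moving the component `C` of `x` in `Yᶜ` onto a set meeting `C` preserves `C`,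
hence permutes the finite nonempty set `closure C \ C`; by freeness it is determined by the image
of a single point. -/
theorem exists_isOpen_finite_return_of_freeAction (hcont : ∀ g : G, Continuous fun x : T1 ↦ g • x)
    (hfree : FreeAction G) {Y : Set T1} (hYne : Y.Nonempty) (hYclosed : IsClosed Y)
    (hYinv : InvariantSet G Y) {x : T1} (hx : x ∉ Y) :
    ∃ C : Set T1, IsOpen C ∧ x ∈ C ∧ {g : G | ∃ y ∈ C, g • y ∈ C}.Finite := by
  have : ContinuousConstSMul G T1 := ⟨hcont⟩
  set C := connectedComponentIn Yᶜ x
  have hCopen : IsOpen C := hYclosed.isOpen_compl.connectedComponentIn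
  have hxC : x ∈ C := mem_connectedComponentIn hx
  have hC : C ≠ univ := by
    obtain ⟨y, hy⟩ := hYne
    exact (ne_univ_iff_exists_notMem C).2 ⟨y, fun hyC ↦ connectedComponentIn_subset _ _ hyC hy⟩
  have hcompl (g : G) : MapsTo (g • ·) Yᶜ Yᶜ := fun z hz hgz ↦
    hz (by simpa using hYinv g⁻¹ _ hgz)
  obtain ⟨q, hq, hqC⟩ := nonempty_closure_sdiff_of_isOpen hCopen ⟨x, hxC⟩ hC
  refine ⟨C, hCopen, hxC, Finite.of_finite_image (f := (· • q)) ?_ fun g _ h _ hgh ↦ ?_⟩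
  · refine (finite_closure_sdiff_of_isPreconnected isPreconnected_connectedComponentIn hC).subset ?_
    rintro _ ⟨g, ⟨y, hy, hgy⟩, rfl⟩
    refine ⟨(mapsTo_smul_connectedComponentIn (hcompl g) hy hgy).closure (hcont g) hq, ?_⟩
    intro hgq
    have hinv : MapsTo (g⁻¹ • ·) C C :=
      mapsTo_smul_connectedComponentIn (hcompl g⁻¹) hgy (by simpa using hy)
    exact hqC (by simpa using hinv hgq)
  · refine (inv_mul_eq_one.1 (hfree (h⁻¹ * g) q ?_)).symm
    rw [mul_smul, show g • q = h • q from hgh, inv_smul_smul]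

theorem exists_finset_card_eq_inv_mul_notMem {H : Type*} [Group H] [Infinite H] {s : Set H}
    (hs : s.Finite) (n : ℕ) :
    ∃ F : Finset H, F.card = n ∧ (F : Set H).Pairwise fun g h ↦ g⁻¹ * h ∉ s := by
  classical
  induction n with
  | zero => exact ⟨∅, by simp⟩
  | succ n ih =>
    obtain ⟨F, hF, hpair⟩ := ih
    have hfin : ((F : Set H) ∪ image2 (fun f t ↦ f * t) F s ∪
        image2 (fun f t ↦ f * t⁻¹) F s).Finite :=
      (F.finite_toSet.union (F.finite_toSet.image2 _ hs)).union (F.finite_toSet.image2 _ hs)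
    obtain ⟨g, hg⟩ := hfin.exists_notMem
    simp only [mem_union, not_or] at hg
    obtain ⟨⟨hgF, hright⟩, hleft⟩ := hg
    refine ⟨insert g F, by rw [Finset.card_insert_of_notMem hgF, hF], ?_⟩
    rw [Finset.coe_insert]
    refine hpair.insert fun f hf _ ↦ ⟨fun hmem ↦ hleft ⟨f, hf, _, hmem, by group⟩,
      fun hmem ↦ hright ⟨f, hf, _, hmem, by group⟩⟩

theorem exists_isMinimalSet_subset {Z : Set T1} (hne : Z.Nonempty) (hclosed : IsClosed Z)
    (hinv : InvariantSet G Z) : ∃ M ⊆ Z, IsMinimalSet G M := by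
  set 𝒲 : Set (Set T1) := {W | W.Nonempty ∧ IsClosed W ∧ InvariantSet G W}
  have hlower (c : Set (Set T1)) (hc : c ⊆ 𝒲) (hchain : IsChain (· ⊆ ·) c) (hcne : c.Nonempty) :
      ∃ W ∈ 𝒲, ∀ s ∈ c, W ⊆ s := by
    have := hcne.to_subtype
    have hinter : (⋂₀ c).Nonempty :=
      IsCompact.nonempty_sInter_of_directed_nonempty_isCompact_isClosed
        (fun s hs t ht ↦ (hchain.total hs ht).elim (fun h ↦ ⟨s, hs, subset_rfl, h⟩)
          fun h ↦ ⟨t, ht, h, subset_rfl⟩)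
        (fun s hs ↦ (hc hs).1) (fun s hs ↦ (hc hs).2.1.isCompact) (fun s hs ↦ (hc hs).2.1)
    exact ⟨⋂₀ c, ⟨hinter, isClosed_sInter fun s hs ↦ (hc hs).2.1,
      fun g x hx s hs ↦ (hc hs).2.2 g x (hx s hs)⟩, fun s hs ↦ sInter_subset_of_mem hs⟩
  obtain ⟨M, hMZ, hM⟩ := zorn_superset_nonempty 𝒲 hlower Z ⟨hne, hclosed, hinv⟩
  exact ⟨M, hMZ, hM.prop.1, hM.prop.2.1, hM.prop.2.2,
    fun W hW hWclosed hWinv hWM ↦ hM.eq_of_subset ⟨hW, hWclosed, hWinv⟩ hWM⟩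

end Wandering

section FejerMap

open scoped Pointwise

variable {A : Type*} [NormedRing A] [StarRing A] [CStarRing A] [NormedAlgebra ℂ A]
  [StarModule ℂ A] [CompleteSpace A]

theorem sum_star_mul_self_eq_sum_card_inter_nsmul {R ι α : Type*} [Semiring R] [StarRing R]
    [DecidableEq α] (s : Finset ι) (b : ι → R) {t : ι → Finset α} {P : Finset α}
    (ht : ∀ i ∈ s, t i ⊆ P) :
    ∑ p ∈ P, star (∑ i ∈ s with p ∈ t i, b i) * ∑ i ∈ s with p ∈ t i, b i =
      ∑ i ∈ s, ∑ j ∈ s, (t i ∩ t j).card • (star (b i) * b j) := by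
  have hterm (p : α) : star (∑ i ∈ s with p ∈ t i, b i) * ∑ i ∈ s with p ∈ t i, b i =
      ∑ i ∈ s, ∑ j ∈ s, if p ∈ t i ∩ t j then star (b i) * b j else 0 := by
    simp only [Finset.sum_filter, star_sum, Finset.sum_mul_sum, Finset.mem_inter]
    refine Finset.sum_congr rfl fun i _ ↦ Finset.sum_congr rfl fun j _ ↦ ?_
    by_cases hi : p ∈ t i <;> by_cases hj : p ∈ t j <;> simp [hi, hj]
  simp only [hterm]
  rw [Finset.sum_comm]
  refine Finset.sum_congr rfl fun i hi ↦ ?_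
  rw [Finset.sum_comm]
  refine Finset.sum_congr rfl fun j _ ↦ ?_
  rw [← Finset.sum_filter, Finset.sum_const, Finset.filter_mem_eq_inter,
    Finset.inter_eq_right.2 (Finset.inter_subset_left.trans (ht i hi))]

namespace CrossedProductData

variable (D : CrossedProductData G A)

theorem continuous_iota : Continuous D.iota :=
  (AddMonoidHomClass.isometry_of_norm D.iota D.iota_isometry).continuous

theorem star_lam (g : G) : star (D.lam g) = D.lam g⁻¹ :=
  left_inv_eq_right_inv (Unitary.mem_iff.1 (D.lam_unitary g)).1
    (by rw [← D.lam_mul, mul_inv_cancel, D.lam_one])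

/-- The translate `x ↦ f (g⁻¹ • x)` of a function on the circle. -/
def translate (g : G) (f : C(T1, ℂ)) : C(T1, ℂ) :=
  f.comp ⟨fun x ↦ g⁻¹ • x, D.cont_smul g⁻¹⟩

theorem translate_one (f : C(T1, ℂ)) : D.translate 1 f = f := by
  ext x
  simp [translate]

theorem lam_mul_iota (g : G) (f : C(T1, ℂ)) :
    D.lam g * D.iota f = D.iota (D.translate g f) * D.lam g := by
  rw [translate, ← D.covariance, mul_assoc _ (star _), (Unitary.mem_iff.1 (D.lam_unitary g)).1,
    mul_one]

theorem star_mul_iota_mul_lam (f f' : C(T1, ℂ)) (k l : G) :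
    star (D.iota f * D.lam k) * (D.iota f' * D.lam l) =
      D.iota (D.translate k⁻¹ (star f * f')) * D.lam (k⁻¹ * l) := calc
  _ = D.lam k⁻¹ * D.iota (star f * f') * D.lam l := by
    simp only [star_mul, star_lam, map_mul, map_star, mul_assoc]
  _ = _ := by rw [lam_mul_iota, D.lam_mul, mul_assoc]

/-- The finite Fourier sum `∑ g, c g λ_g`; these sums form a dense subalgebra of the
crossed product. -/
def fourierSum : (G →₀ C(T1, ℂ)) →ₗ[ℂ] A :=
  Finsupp.lsum ℂ fun g ↦ LinearMap.mulRight ℂ (D.lam g) ∘ₗ D.iota.toAlgHom.toLinearMap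

theorem fourierSum_apply (c : G →₀ C(T1, ℂ)) :
    D.fourierSum c = ∑ g ∈ c.support, D.iota (c g) * D.lam g := by
  simp [fourierSum, Finsupp.sum]

theorem dense_range_fourierSum : Dense (range D.fourierSum) := by
  have hspan : Submodule.span ℂ {a : A | ∃ (f : C(T1, ℂ)) (g : G), a = D.iota f * D.lam g} ≤
      LinearMap.range D.fourierSum := by
    rw [Submodule.span_le]
    rintro _ ⟨f, g, rfl⟩
    exact ⟨Finsupp.single g f, by simp [fourierSum]⟩
  exact (dense_iff_closure_eq.2 D.generates).mono hspan

/-- The term `E(a λ_g*) λ_g` of degree `g` in the formal Fourier series of `a`. -/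
def fourierTerm (g : G) : A →ₗ[ℂ] A :=
  LinearMap.mulRight ℂ (D.lam g) ∘ₗ D.iota.toAlgHom.toLinearMap ∘ₗ D.E ∘ₗ
    LinearMap.mulRight ℂ (star (D.lam g))

theorem fourierTerm_apply (g : G) (a : A) :
    D.fourierTerm g a = D.iota (D.E (a * star (D.lam g))) * D.lam g := rfl

theorem continuous_fourierTerm (g : G) : Continuous (D.fourierTerm g) :=
  ((D.continuous_iota.comp (D.E_cont.comp (continuous_mul_const _))).mul continuous_const)

open scoped Classical in
theorem fourierTerm_iota_mul_lam (f : C(T1, ℂ)) (g h : G) :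
    D.fourierTerm g (D.iota f * D.lam h) = if h = g then D.iota f * D.lam h else 0 := by
  rw [fourierTerm_apply, star_lam, mul_assoc, ← D.lam_mul]
  split_ifs with hgh
  · rw [hgh, mul_inv_cancel, D.lam_one, mul_one, D.E_diag]
  · rw [D.E_off f _ (mul_inv_eq_one.not.2 hgh), map_zero, zero_mul]

open scoped Classical in
/-- The Fejér-type multiplier attached to a finite set `F`: it multiplies the Fourier term of
degree `k` by `#(F ∩ k • F) / #F`, which vanishes unless `k ∈ F / F`. -/
def fejerMap (F : Finset G) : A →ₗ[ℂ] A :=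
  ∑ k ∈ F / F, ((F ∩ k • F).card / F.card : ℂ) • D.fourierTerm k

theorem continuous_fejerMap (F : Finset G) : Continuous (D.fejerMap F) := by
  classical
  simp only [fejerMap, LinearMap.coe_sum, LinearMap.coe_smul, Finset.sum_fn, Pi.smul_apply]
  exact continuous_finsetSum _ fun k _ ↦ (D.continuous_fourierTerm k).const_smul _

open scoped Classical in
theorem fejerMap_iota_mul_lam (F : Finset G) (f : C(T1, ℂ)) (k : G) :
    D.fejerMap F (D.iota f * D.lam k) =
      ((F ∩ k • F).card / F.card : ℂ) • (D.iota f * D.lam k) := by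
  simp only [fejerMap, LinearMap.sum_apply, LinearMap.smul_apply, fourierTerm_iota_mul_lam,
    smul_ite, smul_zero, Finset.sum_ite_eq]
  split_ifs with hk
  · rfl
  have hdisj : F ∩ k • F = ∅ := by
    refine Finset.eq_empty_of_forall_notMem fun x hx ↦ hk ?_
    obtain ⟨hxF, hxk⟩ := Finset.mem_inter.1 hx
    obtain ⟨y, hy, rfl⟩ := Finset.mem_smul_finset.1 hxk
    exact Finset.mem_div.2 ⟨_, hxF, y, hy, by simp⟩
  simp [hdisj]

theorem fejerMap_one {F : Finset G} (hF : F.Nonempty) : D.fejerMap F 1 = 1 := by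
  classical
  have hcard : (F.card : ℂ) ≠ 0 := by exact_mod_cast hF.card_pos.ne'
  have h := D.fejerMap_iota_mul_lam F 1 1
  rwa [one_smul, Finset.inter_self, div_self hcard, one_smul, map_one, D.lam_one, mul_one] at h

/-- The coefficient `#(F ∩ k⁻¹l • F)` of `b_k* b_l` is `#(k • F ∩ l • F)`, a Gram matrix in
`(k, l)`. -/
theorem fejerMap_star_mul_self_mem_closure (F : Finset G) (c : G →₀ C(T1, ℂ)) :
    D.fejerMap F (star (D.fourierSum c) * D.fourierSum c) ∈
      AddSubmonoid.closure (range fun x : A ↦ star x * x) := by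
  classical
  let b (k : G) : A := D.iota (c k) * D.lam k
  have hcoeff (k l : G) : D.fejerMap F (star (b k) * b l) =
      (F.card : ℂ)⁻¹ • (k • F ∩ l • F).card • (star (b k) * b l) := by
    rw [star_mul_iota_mul_lam, fejerMap_iota_mul_lam, ← Nat.cast_smul_eq_nsmul ℂ, smul_smul,
      div_eq_inv_mul, ← Finset.card_smul_finset k (F ∩ _), Finset.smul_finset_inter, smul_smul,
      mul_inv_cancel_left]
  have hsum : D.fejerMap F (star (D.fourierSum c) * D.fourierSum c) = (F.card : ℂ)⁻¹ •
      ∑ p ∈ c.support * F, star (∑ k ∈ c.support with p ∈ k • F, b k) *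
        ∑ k ∈ c.support with p ∈ k • F, b k := by
    rw [sum_star_mul_self_eq_sum_card_inter_nsmul c.support b
      fun k hk ↦ Finset.smul_finset_subset_mul hk, fourierSum_apply, star_sum, Finset.sum_mul_sum]
    simp only [map_sum, hcoeff, Finset.smul_sum, b]
  rw [hsum, Finset.smul_sum]
  refine sum_mem fun p _ ↦ AddSubmonoid.subset_closure ?_
  refine ⟨((√(F.card : ℝ)⁻¹ : ℝ) : ℂ) • ∑ k ∈ c.support with p ∈ k • F, b k, ?_⟩
  have hsq : ((√(F.card : ℝ)⁻¹ : ℝ) : ℂ) * (√(F.card : ℝ)⁻¹ : ℝ) = (F.card : ℂ)⁻¹ := by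
    rw [← Complex.ofReal_mul, Real.mul_self_sqrt (by positivity)]
    push_cast
    rfl
  simp only [star_smul, smul_mul_smul_comm, RCLike.star_def, Complex.conj_ofReal, hsq]

theorem norm_fejerMap_le {F : Finset G} (hF : F.Nonempty) (a : A) :
    ‖D.fejerMap F a‖ ≤ 2 * ‖a‖ := by
  refine norm_map_le_two_mul_of_dense (D.continuous_fejerMap F) (D.fejerMap_one hF)
    D.dense_range_fourierSum ?_ a
  rintro _ ⟨c, rfl⟩
  exact D.fejerMap_star_mul_self_mem_closure F c

theorem norm_sub_fejerMap_iota_mul_lam_le {F : Finset G} (hF : F.Nonempty) {ε : ℝ} {k : G}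
    (hk : open scoped Classical in (1 - ε) * F.card ≤ (F ∩ k • F).card) (f : C(T1, ℂ)) :
    ‖D.iota f * D.lam k - D.fejerMap F (D.iota f * D.lam k)‖ ≤ ε * ‖D.iota f * D.lam k‖ := by
  classical
  have hcard : (0 : ℝ) < F.card := by exact_mod_cast hF.card_pos
  set r : ℝ := (F ∩ k • F).card / F.card
  have hr : r ≤ 1 :=
    div_le_one_of_le₀ (by exact_mod_cast Finset.card_le_card Finset.inter_subset_left) hcard.le
  have hεr : 1 - ε ≤ r := (le_div_iff₀ hcard).2 hk
  calc _ = ‖((1 - r : ℝ) : ℂ) • (D.iota f * D.lam k)‖ := by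
        rw [fejerMap_iota_mul_lam, Complex.ofReal_sub, sub_smul]
        simp [r]
    _ = (1 - r) * ‖D.iota f * D.lam k‖ := by
        rw [norm_smul, Complex.norm_real, Real.norm_of_nonneg (sub_nonneg.2 hr)]
    _ ≤ ε * ‖D.iota f * D.lam k‖ := by gcongr; linarith

theorem exists_norm_fourierSum_sub_fejerMap_le (hG : FoelnerCondition G) (c : G →₀ C(T1, ℂ))
    {ε : ℝ} (hε : 0 < ε) :
    ∃ F : Finset G, F.Nonempty ∧ ‖D.fourierSum c - D.fejerMap F (D.fourierSum c)‖ ≤ ε := by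
  set B := ∑ k ∈ c.support, ‖D.iota (c k) * D.lam k‖
  have : 0 ≤ B := Finset.sum_nonneg fun _ _ ↦ norm_nonneg _
  obtain ⟨F, hF, hfoelner⟩ := hG c.support (ε / (B + 1)) (by positivity)
  refine ⟨F, hF, ?_⟩
  calc ‖D.fourierSum c - D.fejerMap F (D.fourierSum c)‖
      = ‖∑ k ∈ c.support, (D.iota (c k) * D.lam k - D.fejerMap F (D.iota (c k) * D.lam k))‖ := by
        rw [fourierSum_apply, map_sum, Finset.sum_sub_distrib]
    _ ≤ ∑ k ∈ c.support, ε / (B + 1) * ‖D.iota (c k) * D.lam k‖ :=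
        norm_sum_le_of_le _ fun k hk ↦
          D.norm_sub_fejerMap_iota_mul_lam_le hF (hfoelner k hk) (c k)
    _ = ε * (B / (B + 1)) := by rw [← Finset.mul_sum]; ring
    _ ≤ ε := mul_le_of_le_one_right hε.le (div_le_one_of_le₀ (by linarith) (by positivity))

theorem exists_norm_sub_fejerMap_lt (hG : FoelnerCondition G) (a : A) {ε : ℝ} (hε : 0 < ε) :
    ∃ F : Finset G, ‖a - D.fejerMap F a‖ < ε := by
  obtain ⟨_, ⟨c, rfl⟩, hc⟩ := D.dense_range_fourierSum.exists_dist_lt a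
    (by positivity : 0 < ε / 4)
  rw [dist_eq_norm] at hc
  obtain ⟨F, hF, happrox⟩ := D.exists_norm_fourierSum_sub_fejerMap_le hG c
    (by positivity : 0 < ε / 4)
  set b := D.fourierSum c
  refine ⟨F, ?_⟩
  calc ‖a - D.fejerMap F a‖ = ‖(a - b) + (b - D.fejerMap F b) - D.fejerMap F (a - b)‖ := by
        rw [map_sub]; congr 1; abel
    _ ≤ ‖a - b‖ + ‖b - D.fejerMap F b‖ + ‖D.fejerMap F (a - b)‖ :=
        (norm_sub_le _ _).trans (add_le_add_left (norm_add_le _ _) _)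
    _ < ε := by linarith [D.norm_fejerMap_le hF (a - b)]

theorem mem_of_forall_fourierTerm_mem (hG : FoelnerCondition G) {p : Submodule ℂ A}
    (hp : IsClosed (p : Set A)) {a : A} (ha : ∀ g, D.fourierTerm g a ∈ p) : a ∈ p := by
  classical
  refine hp.closure_subset_iff.2 subset_rfl (Metric.mem_closure_iff.2 fun ε hε ↦ ?_)
  obtain ⟨F, hF⟩ := D.exists_norm_sub_fejerMap_lt hG a hε
  refine ⟨D.fejerMap F a, ?_, by rwa [dist_eq_norm]⟩
  simp only [fejerMap, LinearMap.sum_apply, LinearMap.smul_apply]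
  exact sum_mem fun k _ ↦ p.smul_mem _ (ha k)

end CrossedProductData

end FejerMap

section ClosedIdeals

namespace IsClosedTwoSidedIdeal

variable {A : Type*} [NormedRing A] {S : Set A}

theorem mul_mem_left (hS : IsClosedTwoSidedIdeal S) (x : A) {a : A} (ha : a ∈ S) : x * a ∈ S :=
  (hS.2.2.2.2 a ha x).1

theorem mul_mem_right (hS : IsClosedTwoSidedIdeal S) {a : A} (ha : a ∈ S) (x : A) : a * x ∈ S :=
  (hS.2.2.2.2 a ha x).2

/-- A closed two-sided ideal as a linear subspace, which makes the API for subspaces available. -/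
def toSubmodule [NormedAlgebra ℂ A] (hS : IsClosedTwoSidedIdeal S) : Submodule ℂ A where
  carrier := S
  add_mem' ha hb := hS.2.2.1 _ ha _ hb
  zero_mem' := hS.2.1
  smul_mem' c a ha := by simpa using hS.mul_mem_left (c • 1) ha

theorem eq_univ_iff_one_mem (hS : IsClosedTwoSidedIdeal S) : S = univ ↔ 1 ∈ S :=
  ⟨fun h ↦ h ▸ mem_univ _, fun h ↦ eq_univ_of_forall fun a ↦ by simpa using hS.mul_mem_left a h⟩

end IsClosedTwoSidedIdeal

theorem exists_isOpen_disjoint_smul {H X : Type*} [Group H] [TopologicalSpace X] [T2Space X]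
    [MulAction H X] [ContinuousConstSMul H X] {K : Finset H} {x : X} (hK : ∀ k ∈ K, k • x ≠ x) :
    ∃ U : Set X, IsOpen U ∧ x ∈ U ∧ ∀ k ∈ K, ∀ y ∈ U, k • y ∉ U := by
  have hsep (k : H) (hk : k ∈ K) : ∃ U : Set X, IsOpen U ∧ x ∈ U ∧ ∀ y ∈ U, k • y ∉ U := by
    obtain ⟨V, W, hV, hW, hkxV, hxW, hVW⟩ := t2_separation (hK k hk)
    exact ⟨W ∩ (k • ·) ⁻¹' V, hW.inter (hV.preimage (continuous_const_smul k)), ⟨hxW, hkxV⟩,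
      fun y hy hky ↦ disjoint_left.1 hVW hy.2 hky.1⟩
  choose! U hU hxU hdisj using hsep
  exact ⟨⋂ k ∈ K, U k, isOpen_biInter_finset hU, mem_iInter₂.2 hxU, fun k hk y hy hky ↦
    hdisj k hk y (mem_iInter₂.1 hy k hk) (mem_iInter₂.1 hky k hk)⟩

theorem exists_sum_mul_self_eq_one_smul_disjoint {H X : Type*} [Group H] [TopologicalSpace X]
    [T2Space X] [CompactSpace X] [MulAction H X] [ContinuousConstSMul H X] {K : Finset H}
    (hK : ∀ k ∈ K, ∀ x : X, k • x ≠ x) :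
    ∃ (n : ℕ) (u : Fin n → C(X, ℝ)), (∀ x, ∑ i, u i x * u i x = 1) ∧
      ∀ k ∈ K, ∀ i x, u i x * u i (k • x) = 0 := by
  choose U hU hxU hdisj using fun x : X ↦ exists_isOpen_disjoint_smul fun k hk ↦ hK k hk x
  obtain ⟨t, ht⟩ := isCompact_univ.elim_finite_subcover U hU
    fun x _ ↦ mem_iUnion.2 ⟨x, hxU x⟩
  have hcover : univ ⊆ ⋃ i, U (t.equivFin.symm i) := fun x hx ↦ by
    obtain ⟨y, hy, hxy⟩ := mem_iUnion₂.1 (ht hx)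
    exact mem_iUnion.2 ⟨t.equivFin ⟨y, hy⟩, by simpa using hxy⟩
  obtain ⟨f, hfsupp, hfsum, hf, -⟩ := exists_continuous_sum_one_of_isOpen_isCompact
    (fun i ↦ hU (t.equivFin.symm i)) isCompact_univ hcover
  refine ⟨_, fun i ↦ ⟨fun x ↦ √(f i x), by fun_prop⟩, fun x ↦ ?_, fun k hk i x ↦ ?_⟩
  · simpa [Real.mul_self_sqrt (hf _ x).1] using hfsum (mem_univ x)
  · have hzero {y : X} (hy : y ∉ U (t.equivFin.symm i)) : f i y = 0 :=
      image_eq_zero_of_notMem_tsupport (notMem_subset (hfsupp i) hy)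
    by_cases hx : x ∈ U (t.equivFin.symm i)
    · simp [hzero (hdisj _ k hk x hx)]
    · simp [hzero hx]

namespace CrossedProductData

variable {A : Type*} [NormedRing A] [StarRing A] [CStarRing A] [NormedAlgebra ℂ A]
  [StarModule ℂ A] [CompleteSpace A] (D : CrossedProductData G A)

/-- Compression by a finite family of functions: `a ↦ ∑ i, u i * a * u i`. -/
def compression {n : ℕ} (u : Fin n → C(T1, ℂ)) : A →ₗ[ℂ] A :=
  ∑ i, LinearMap.mulLeft ℂ (D.iota (u i)) ∘ₗ LinearMap.mulRight ℂ (D.iota (u i))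

theorem compression_apply {n : ℕ} (u : Fin n → C(T1, ℂ)) (a : A) :
    D.compression u a = ∑ i, D.iota (u i) * (a * D.iota (u i)) := by
  simp [compression]

theorem compression_iota_mul_lam {n : ℕ} (u : Fin n → C(T1, ℂ)) (f : C(T1, ℂ)) (g : G) :
    D.compression u (D.iota f * D.lam g) =
      D.iota (f * ∑ i, u i * D.translate g (u i)) * D.lam g := by
  simp only [compression_apply, mul_assoc, lam_mul_iota, map_mul, map_sum, Finset.mul_sum,
    Finset.sum_mul]
  refine Finset.sum_congr rfl fun i _ ↦ ?_
  rw [← mul_assoc, ← map_mul, mul_comm, map_mul, mul_assoc]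

theorem norm_compression_le {n : ℕ} {u : Fin n → C(T1, ℂ)} (hu : ∀ i, IsSelfAdjoint (u i))
    (hsum : ∑ i, u i * u i = 1) (a : A) : ‖D.compression u a‖ ≤ 2 * ‖a‖ := by
  have hcont : Continuous (D.compression u) := by
    simp only [funext (D.compression_apply u)]
    fun_prop
  have hone : D.compression u 1 = 1 := by
    simp only [compression_apply, one_mul, ← map_mul, ← map_sum, hsum, map_one]
  refine norm_map_le_two_mul_of_dense hcont hone dense_univ (fun b _ ↦ ?_) a
  rw [compression_apply]
  refine sum_mem fun i _ ↦ AddSubmonoid.subset_closure ⟨b * D.iota (u i), ?_⟩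
  simp only [star_mul, ← map_star, (hu i).star_eq, mul_assoc]

/-- Compressing by a partition of unity subordinate to a cover by sets that every `k ∈ K` moves
off themselves kills the terms of a Fourier sum of degree in `K`, and fixes the functions. -/
theorem exists_compression_fourierSum_eq (hfree : FreeAction G) (c : G →₀ C(T1, ℂ)) :
    ∃ (n : ℕ) (u : Fin n → C(T1, ℂ)), (∀ a, ‖D.compression u a‖ ≤ 2 * ‖a‖) ∧
      D.compression u (D.fourierSum c) = D.iota (c 1) := by
  classical
  have : ContinuousConstSMul G T1 := ⟨D.cont_smul⟩
  obtain ⟨n, v, hsum, hdisj⟩ := exists_sum_mul_self_eq_one_smul_disjoint (H := G) (X := T1)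
    (K := (c.support.erase 1).image (·⁻¹)) fun k hk x hkx ↦ by
      simp [hfree k x hkx] at hk
  let u (i : Fin n) : C(T1, ℂ) := ⟨fun x ↦ v i x, by fun_prop⟩
  have husum : ∑ i, u i * u i = 1 := by
    ext x
    simpa [u] using congrArg Complex.ofReal (hsum x)
  have hu (i : Fin n) : IsSelfAdjoint (u i) := by
    ext x
    simp [u]
  have hoff (k : G) (hk : k ∈ c.support) (hk1 : k ≠ 1) (i : Fin n) :
      u i * D.translate k (u i) = 0 := by
    ext x
    simpa [u, translate] using hdisj k⁻¹
      (Finset.mem_image_of_mem _ (Finset.mem_erase.2 ⟨hk1, hk⟩)) i x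
  refine ⟨n, u, D.norm_compression_le hu husum, ?_⟩
  rw [fourierSum_apply, map_sum, Finset.sum_eq_single 1]
  · rw [compression_iota_mul_lam]
    simp only [translate_one, husum, mul_one, D.lam_one]
  · intro k hk hk1
    simp [compression_iota_mul_lam, hoff k hk hk1]
  · intro h
    simp [Finsupp.notMem_support_iff.1 h]

theorem E_fourierSum (c : G →₀ C(T1, ℂ)) : D.E (D.fourierSum c) = c 1 := by
  rw [fourierSum_apply, map_sum, Finset.sum_eq_single 1]
  · rw [D.lam_one, mul_one, D.E_diag]
  · exact fun k _ hk ↦ D.E_off _ k hk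
  · intro h
    simp [Finsupp.notMem_support_iff.1 h]

theorem iota_E_mem (hfree : FreeAction G) {S : Set A} (hS : IsClosedTwoSidedIdeal S) {a : A}
    (ha : a ∈ S) : D.iota (D.E a) ∈ S := by
  refine hS.1.closure_subset_iff.2 subset_rfl (Metric.mem_closure_iff.2 fun ε hε ↦ ?_)
  have hcont : Continuous fun b ↦ ‖D.iota (D.E a) - D.iota (D.E b)‖ + 2 * ‖b - a‖ := by
    have := D.continuous_iota.comp D.E_cont
    fun_prop
  obtain ⟨_, ⟨c, rfl⟩, hb⟩ := D.dense_range_fourierSum.exists_mem_open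
    (isOpen_lt hcont continuous_const) ⟨a, by simpa using hε⟩
  obtain ⟨n, u, hnorm, hu⟩ := D.exists_compression_fourierSum_eq hfree c
  refine ⟨D.compression u a, ?_, ?_⟩
  · rw [compression_apply]
    exact sum_mem (S := hS.toSubmodule) fun i _ ↦ hS.mul_mem_left _ (hS.mul_mem_right ha _)
  rw [← D.E_fourierSum c] at hu
  calc dist (D.iota (D.E a)) (D.compression u a)
      = ‖D.iota (D.E a) - D.iota (D.E (D.fourierSum c)) +
          D.compression u (D.fourierSum c - a)‖ := by
        rw [dist_eq_norm, map_sub, hu]; congr 1; abel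
    _ ≤ ‖D.iota (D.E a) - D.iota (D.E (D.fourierSum c))‖ + 2 * ‖D.fourierSum c - a‖ :=
        (norm_add_le _ _).trans (add_le_add_right (hnorm _) _)
    _ < ε := hb

end CrossedProductData

end ClosedIdeals

section FunctionIdeals

namespace CrossedProductData

variable {A : Type*} [NormedRing A] [StarRing A] [CStarRing A] [NormedAlgebra ℂ A]
  [StarModule ℂ A] [CompleteSpace A] (D : CrossedProductData G A) {S T : Set A}
  (hS : IsClosedTwoSidedIdeal S) (hT : IsClosedTwoSidedIdeal T)

/-- The ideal `S ∩ C(𝕋)` of the functions that lie in a closed two-sided ideal `S` of the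
crossed product. -/
def functionIdeal : Ideal C(T1, ℂ) where
  carrier := D.iota ⁻¹' S
  add_mem' hf hf' := by simpa only [mem_preimage, map_add] using hS.2.2.1 _ hf _ hf'
  zero_mem' := by simpa only [mem_preimage, map_zero] using hS.2.1
  smul_mem' f f' hf' := by simpa using hS.mul_mem_left (D.iota f) hf'

theorem mem_functionIdeal {f : C(T1, ℂ)} : f ∈ D.functionIdeal hS ↔ D.iota f ∈ S := Iff.rfl

theorem idealOfSet_setOfIdeal_functionIdeal :
    ContinuousMap.idealOfSet ℂ (ContinuousMap.setOfIdeal (D.functionIdeal hS)) =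
      D.functionIdeal hS :=
  ContinuousMap.idealOfSet_ofIdeal_isClosed (hS.1.preimage D.continuous_iota)

theorem subset_of_functionIdeal_le (hG : FoelnerCondition G) (hfree : FreeAction G)
    (hle : D.functionIdeal hS ≤ D.functionIdeal hT) : S ⊆ T := by
  refine fun a ha ↦ D.mem_of_forall_fourierTerm_mem hG (p := hT.toSubmodule) hT.1 fun g ↦ ?_
  rw [fourierTerm_apply]
  exact hT.mul_mem_right (hle (D.iota_E_mem hfree hS (hS.mul_mem_right ha _))) _

theorem translate_mem_functionIdeal (g : G) {f : C(T1, ℂ)} (hf : f ∈ D.functionIdeal hS) :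
    D.translate g f ∈ D.functionIdeal hS := by
  rw [mem_functionIdeal, translate, ← D.covariance]
  exact hS.mul_mem_right (hS.mul_mem_left _ hf) _

theorem invariantSet_compl_setOfIdeal_functionIdeal :
    InvariantSet G (ContinuousMap.setOfIdeal (D.functionIdeal hS))ᶜ := by
  intro g x hx
  simp only [mem_compl_iff, ContinuousMap.notMem_setOfIdeal] at hx ⊢
  intro f hf
  simpa [translate] using hx (D.translate_mem_functionIdeal hS g⁻¹ hf)

theorem setOfIdeal_functionIdeal_ne_univ (hne : S ≠ univ) :
    ContinuousMap.setOfIdeal (D.functionIdeal hS) ≠ univ := by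
  intro huniv
  have hone : (1 : C(T1, ℂ)) ∈ D.functionIdeal hS := by
    rw [← idealOfSet_setOfIdeal_functionIdeal, huniv, ContinuousMap.mem_idealOfSet]
    simp
  rw [mem_functionIdeal, map_one] at hone
  exact hne (hS.eq_univ_iff_one_mem.2 hone)

theorem functionIdeal_le_idealOfSet_compl {Y : Set T1}
    (hYuniq : ∀ Z : Set T1, IsMinimalSet G Z → Z = Y) (hne : S ≠ univ) :
    D.functionIdeal hS ≤ ContinuousMap.idealOfSet ℂ Yᶜ := by
  obtain ⟨M, hMsub, hM⟩ := exists_isMinimalSet_subset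
    (nonempty_compl.2 (D.setOfIdeal_functionIdeal_ne_univ hS hne))
    (ContinuousMap.setOfIdeal_open _).isClosed_compl
    (D.invariantSet_compl_setOfIdeal_functionIdeal hS)
  obtain rfl := hYuniq M hM
  intro f hf
  rw [ContinuousMap.mem_idealOfSet, compl_compl]
  exact fun y hy ↦ ContinuousMap.notMem_setOfIdeal.1 (hMsub hy) hf

end CrossedProductData

end FunctionIdeals

section Trace

open scoped ComplexOrder

variable {A : Type*} [NormedRing A] [StarRing A] [CStarRing A] [NormedAlgebra ℂ A]
  [StarModule ℂ A] [CompleteSpace A]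

theorem CrossedProductData.sum_translate_le_one (D : CrossedProductData G A) {p : C(T1, ℂ)}
    (hp : p ≤ 1) {C : Set T1} (hC : ∀ y ∉ C, p y = 0) {F : Finset G}
    (hF : (F : Set G).Pairwise fun g h ↦ ∀ y ∈ C, (g⁻¹ * h) • y ∉ C) :
    ∑ g ∈ F, D.translate g p ≤ 1 := by
  intro y
  have happly (g : G) : D.translate g p y = p (g⁻¹ • y) := rfl
  change (∑ g ∈ F, D.translate g p) y ≤ 1
  simp only [ContinuousMap.sum_apply, happly]
  by_cases hex : ∃ h ∈ F, h⁻¹ • y ∈ C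
  · obtain ⟨h, hh, hy⟩ := hex
    rw [Finset.sum_eq_single_of_mem h hh fun g hg hgh ↦ hC _ ?_]
    · exact hp _
    · simpa [mul_smul] using hF hg hh hgh _ hy
  · push Not at hex
    rw [Finset.sum_eq_zero fun g hg ↦ hC _ (hex g hg)]
    exact zero_le_one

theorem eq_zero_of_forall_nonneg_add_mul {r z : ℂ} (h : ∀ t : ℝ, 0 ≤ r + t * z) : z = 0 := by
  have him : z.im = 0 := by
    have h₀ : 0 = r.im := by simpa using (Complex.nonneg_iff.1 (h 0)).2
    have h₁ : 0 = r.im + z.im := by simpa using (Complex.nonneg_iff.1 (h 1)).2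
    linarith
  have hre : z.re = 0 := by
    by_contra hne
    have := (Complex.nonneg_iff.1 (h (-(r.re + 1) / z.re))).1
    rw [Complex.add_re, Complex.re_ofReal_mul, div_mul_cancel₀ _ hne] at this
    linarith
  exact Complex.ext hre him

namespace IsTracialState

variable {τ : A →ₗ[ℂ] ℂ}

theorem map_star_mul_self_nonneg (hτ : IsTracialState τ) (a : A) : 0 ≤ τ (star a * a) := by
  obtain ⟨r, hr, h⟩ := hτ.2.2.2 a
  rw [h]
  exact_mod_cast hr

/-- Positivity of `τ` at `y + w • a` says that `τ(y*y) + w τ(y*a) + w̄ τ(a*y) ≥ 0`, which for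
all `w` on a real line is possible only if the linear part vanishes. -/
theorem map_star_mul_self_eq_zero_iff (hτ : IsTracialState τ) {a : A} :
    τ (star a * a) = 0 ↔ ∀ x, τ (x * a) = 0 := by
  refine ⟨fun h x ↦ ?_, fun h ↦ h _⟩
  obtain ⟨y, rfl⟩ : ∃ y, star y = x := ⟨star x, star_star x⟩
  have hlin (w : ℂ) : w * τ (star y * a) + star w * τ (star a * y) = 0 := by
    refine eq_zero_of_forall_nonneg_add_mul (r := τ (star y * y)) fun t ↦ ?_
    convert hτ.map_star_mul_self_nonneg (y + (t * w) • a) using 1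
    simp only [star_add, star_smul, star_mul', add_mul, mul_add, smul_mul_assoc, mul_smul_comm,
      map_add, map_smul, smul_eq_mul, h, RCLike.star_def, Complex.conj_ofReal]
    ring
  have h₁ := hlin 1
  have hI := hlin Complex.I
  simp only [star_one, one_mul, RCLike.star_def, Complex.conj_I] at h₁ hI
  linear_combination (1 / 2 : ℂ) * h₁ - (Complex.I / 2) * hI +
    (τ (star y * a) - τ (star a * y)) / 2 * Complex.I_sq

theorem isClosedTwoSidedIdeal (hτ : IsTracialState τ) :
    IsClosedTwoSidedIdeal {a : A | τ (star a * a) = 0} := by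
  refine ⟨isClosed_eq (hτ.1.comp (by fun_prop)) continuous_const, by simp, ?_, by simp, ?_⟩
  all_goals simp only [mem_ofPred_eq, hτ.map_star_mul_self_eq_zero_iff]
  · intro a ha b hb x
    rw [mul_add, map_add, ha, hb, add_zero]
  · refine fun a ha x ↦ ⟨fun y ↦ ?_, fun y ↦ ?_⟩
    · rw [← mul_assoc, ha]
    · rw [← mul_assoc, hτ.2.2.1, ← mul_assoc, ha]

theorem setOf_map_star_mul_self_eq_zero_ne_univ (hτ : IsTracialState τ) :
    {a : A | τ (star a * a) = 0} ≠ univ := by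
  rw [Ne, hτ.isClosedTwoSidedIdeal.eq_univ_iff_one_mem]
  simp [hτ.2.1]

theorem map_iota_nonneg (hτ : IsTracialState τ) (D : CrossedProductData G A) {p : C(T1, ℂ)}
    (hp : 0 ≤ p) : 0 ≤ τ (D.iota p) := by
  obtain ⟨q, rfl⟩ := CStarAlgebra.nonneg_iff_eq_star_mul_self.1 hp
  simpa only [map_mul, map_star] using hτ.map_star_mul_self_nonneg (D.iota q)

theorem map_iota_translate (hτ : IsTracialState τ) (D : CrossedProductData G A) (g : G)
    (f : C(T1, ℂ)) : τ (D.iota (D.translate g f)) = τ (D.iota f) := by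
  rw [CrossedProductData.translate, ← D.covariance, hτ.2.2.1, ← mul_assoc,
    (Unitary.mem_iff.1 (D.lam_unitary g)).1, one_mul]

/-- `G` contains arbitrarily many elements for which the translates of `C` are disjoint; the
corresponding translates of `p` have the same trace and sum to at most `1`. -/
theorem map_iota_eq_zero_of_finite_return [Infinite G] (hτ : IsTracialState τ)
    (D : CrossedProductData G A) {p : C(T1, ℂ)} (hp₀ : 0 ≤ p) (hp₁ : p ≤ 1) {C : Set T1}
    (hC : ∀ y ∉ C, p y = 0) (hfin : {g : G | ∃ y ∈ C, g • y ∈ C}.Finite) :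
    τ (D.iota p) = 0 := by
  have hbound (n : ℕ) : n • τ (D.iota p) ≤ 1 := by
    obtain ⟨F, hcard, hF⟩ := exists_finset_card_eq_inv_mul_notMem hfin n
    have hsum := D.sum_translate_le_one hp₁ hC
      (hF.imp fun g h hgh y hy hgy ↦ hgh ⟨y, hy, hgy⟩)
    have := hτ.map_iota_nonneg D (sub_nonneg.2 hsum)
    simpa [map_iota_translate hτ, hτ.2.1, hcard] using this
  have hre (n : ℕ) : n * (τ (D.iota p)).re ≤ 1 := by
    simpa using (Complex.le_def.1 (hbound n)).1
  obtain ⟨hre₀, him⟩ := Complex.nonneg_iff.1 (hτ.map_iota_nonneg D hp₀)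
  refine Complex.ext (hre₀.antisymm' (not_lt.1 fun hpos ↦ ?_)) him.symm
  obtain ⟨n, hn⟩ := exists_lt_nsmul hpos 1
  exact (hre n).not_gt (by simpa using hn)

theorem exists_ne_zero_map_star_mul_self_eq_zero [Infinite G] (hτ : IsTracialState τ)
    (D : CrossedProductData G A) (hfree : FreeAction G) {Y : Set T1} (hYne : Y.Nonempty)
    (hYclosed : IsClosed Y) (hYinv : InvariantSet G Y) {x : T1} (hx : x ∉ Y) :
    ∃ f : C(T1, ℂ), f x ≠ 0 ∧ τ (star (D.iota f) * D.iota f) = 0 := by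
  obtain ⟨C, hCopen, hxC, hfin⟩ :=
    exists_isOpen_finite_return_of_freeAction D.cont_smul hfree hYne hYclosed hYinv hx
  obtain ⟨h, h₀, h₁, hIcc⟩ := exists_continuous_zero_one_of_isClosed hCopen.isClosed_compl
    (isClosed_singleton (x := x)) (by simpa using hxC)
  refine ⟨⟨fun y ↦ h y, by fun_prop⟩, by simp [h₁ rfl], ?_⟩
  rw [← map_star, ← map_mul]
  refine hτ.map_iota_eq_zero_of_finite_return D (star_mul_self_nonneg _) (fun y ↦ ?_)
    (fun y hy ↦ by simp [h₀ hy]) hfin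
  have : h y * h y ≤ 1 := mul_le_one₀ (hIcc y).2 (hIcc y).1 (hIcc y).2
  simpa using mod_cast this

theorem idealOfSet_compl_le_functionIdeal [Infinite G] (hτ : IsTracialState τ)
    (D : CrossedProductData G A) (hfree : FreeAction G) {Y : Set T1} (hYne : Y.Nonempty)
    (hYclosed : IsClosed Y) (hYinv : InvariantSet G Y) :
    ContinuousMap.idealOfSet ℂ Yᶜ ≤ D.functionIdeal hτ.isClosedTwoSidedIdeal := by
  rw [← D.idealOfSet_setOfIdeal_functionIdeal]
  refine (ContinuousMap.ideal_gc T1 ℂ).monotone_u fun x hx ↦ ?_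
  obtain ⟨f, hfx, hf⟩ :=
    hτ.exists_ne_zero_map_star_mul_self_eq_zero D hfree hYne hYclosed hYinv hx
  exact ContinuousMap.mem_setOfIdeal.2 ⟨f, hf, hfx⟩

end IsTracialState

end Trace

theorem statement17_general (G : Type*) [Group G] [Infinite G] [MulAction G T1]
    {A : Type*} [NormedRing A] [StarRing A] [CStarRing A] [NormedAlgebra ℂ A]
    [StarModule ℂ A] [CompleteSpace A] (hG : FoelnerCondition G) (D : CrossedProductData G A)
    (hfree : FreeAction G) (Y : Set T1) (hY : IsMinimalSet G Y)
    (hYuniq : ∀ Z : Set T1, IsMinimalSet G Z → Z = Y) (τ : A →ₗ[ℂ] ℂ) (hτ : IsTracialState τ) :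
    {a : A | τ (star a * a) = 0} =
      ⋂₀ {S : Set A | IsClosedTwoSidedIdeal S ∧
        {a : A | ∃ f : C(T1, ℂ), (∀ y ∈ Y, f y = 0) ∧ a = D.iota f} ⊆ S} ∧
    IsClosedTwoSidedIdeal {a : A | τ (star a * a) = 0} ∧
    {a : A | τ (star a * a) = 0} ≠ Set.univ ∧
    ∀ S : Set A, IsClosedTwoSidedIdeal S → S ≠ Set.univ →
      S ⊆ {a : A | τ (star a * a) = 0} := by
  have hJ := hτ.isClosedTwoSidedIdeal
  have hJne := hτ.setOf_map_star_mul_self_eq_zero_ne_univ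
  have hYJ := hτ.idealOfSet_compl_le_functionIdeal D hfree hY.1 hY.2.1 hY.2.2.1
  refine ⟨Subset.antisymm (subset_sInter ?_) (sInter_subset_of_mem ⟨hJ, ?_⟩), hJ, hJne, ?_⟩
  · rintro S ⟨hS, hYS⟩
    refine D.subset_of_functionIdeal_le hJ hS hG hfree fun f hf ↦ hYS ⟨f, ?_, rfl⟩
    simpa [ContinuousMap.mem_idealOfSet] using D.functionIdeal_le_idealOfSet_compl hJ hYuniq hJne hf
  · rintro _ ⟨f, hf, rfl⟩
    exact hYJ (ContinuousMap.mem_idealOfSet.2 (by simpa using hf))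
  · exact fun S hS hne ↦ D.subset_of_functionIdeal_le hS hJ hG hfree
      ((D.functionIdeal_le_idealOfSet_compl hS hYuniq hne).trans hYJ)

/-- for a free Denjoy action of a countably infinite discrete
abelian group, in `A = C(𝕋) ⋊ G` with unique tracial state `τ`, the trace ideal
`J_τ = {a : τ(a*a) = 0}` equals the closed two-sided ideal generated by the functions
vanishing on the unique minimal set `Y` (i.e. `C₀(𝕋\Y) ⋊ G`), and this is the unique
maximal proper closed two-sided ideal of `A`. -/
theorem statement17 (G : Type*) [CommGroup G] [Countable G] [Infinite G]
    [MulAction G T1]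
    {A : Type*} [NormedRing A] [StarRing A] [CStarRing A] [NormedAlgebra ℂ A]
    [StarModule ℂ A] [CompleteSpace A]
    (D : CrossedProductData G A)
    (hD : IsDenjoy G) (hfree : FreeAction G)
    (Y : Set T1) (hY : IsMinimalSet G Y)
    (hYuniq : ∀ Z : Set T1, IsMinimalSet G Z → Z = Y) (hYproper : Y ≠ Set.univ)
    (τ : A →ₗ[ℂ] ℂ) (hτ : IsTracialState τ)
    (hτuniq : ∀ σ : A →ₗ[ℂ] ℂ, IsTracialState σ → σ = τ) :
    {a : A | τ (star a * a) = 0} =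
      ⋂₀ {S : Set A | IsClosedTwoSidedIdeal S ∧
        {a : A | ∃ f : C(T1, ℂ), (∀ y ∈ Y, f y = 0) ∧ a = D.iota f} ⊆ S} ∧
    IsClosedTwoSidedIdeal {a : A | τ (star a * a) = 0} ∧
    {a : A | τ (star a * a) = 0} ≠ Set.univ ∧
    ∀ S : Set A, IsClosedTwoSidedIdeal S → S ≠ Set.univ →
      S ⊆ {a : A | τ (star a * a) = 0} :=
  statement17_general G (foelnerCondition_of_commGroup G) D hfree Y hY hYuniq τ hτ
end
end
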